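/- arXiv:0901.4925 — 10 statements merged into one kernel-verified Lean document; each statement's English description precedes it below -/
import Mathlib

section
/- For every real number H with 1/2 < H < 1, one has (2H-1) · ∫₀^∞ ∫₀^∞ e^{-(s+u)} |u-s|^{2H-2} ds du = Γ(2H), where Γ is the Gamma function and the double integral is a Lebesgue integral over [0,∞)². -/
open MeasureTheory Real Set

theorem stmt_0 (H : ℝ) (h1 : 1/2 < H) (h2 : H < 1) :
    (2*H - 1) * ∫ u in Ioi (0:ℝ), ∫ s in Ioi (0:ℝ),
      Real.exp (-(s+u)) * |u - s| ^ (2*H - 2) = Real.Gamma (2*H) := by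
  set p : ℝ → ℝ := (Ioi (0:ℝ)).indicator (fun y => Real.exp (-2 * y)) with hp
  set q : ℝ → ℝ := (Ioi (0:ℝ)).indicator (fun d => Real.exp (-d) * d ^ (2*H - 2)) with hq
  have pint : Integrable p :=
    (integrable_indicator_iff measurableSet_Ioi).2 (exp_neg_integrableOn_Ioi 0 (by norm_num))
  have qint : Integrable q := by
    refine (integrable_indicator_iff measurableSet_Ioi).2 ?_
    have := Real.GammaIntegral_convergent (s := 2*H-1) (by linarith)
    rwa [show 2*H - 1 - 1 = 2*H - 2 by ring] at this
  have pval : ∫ y, p y = 1/2 := by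
    rw [hp, integral_indicator measurableSet_Ioi, integral_exp_mul_Ioi (by norm_num)]
    norm_num
  have qval : ∫ y, q y = Real.Gamma (2*H-1) := by
    rw [hq, integral_indicator measurableSet_Ioi, Real.Gamma_eq_integral (by linarith),
      show 2*H - 1 - 1 = 2*H - 2 by ring]
  have Fint : Integrable (fun z : ℝ × ℝ => p z.1 * q z.2) (volume.prod volume) :=
    pint.mul_prod qint
  have Fval : ∫ z : ℝ × ℝ, p z.1 * q z.2 ∂(volume.prod volume) = 1/2 * Real.Gamma (2*H-1) := by
    rw [integral_prod_mul, pval, qval]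
  have mp : MeasurePreserving (fun z : ℝ × ℝ => (z.2, z.1 - z.2))
      ((volume : Measure ℝ).prod volume) (volume.prod volume) :=
    measurePreserving_prod_sub_swap volume volume
  have Aint : Integrable (fun z : ℝ × ℝ => p z.2 * q (z.1 - z.2)) (volume.prod volume) :=
    mp.integrable_comp_of_integrable Fint
  have Aval : ∫ z : ℝ × ℝ, p z.2 * q (z.1 - z.2) ∂(volume.prod volume)
      = 1/2 * Real.Gamma (2*H-1) := by
    rw [← Fval]
    have h := integral_map (μ := (volume : Measure ℝ).prod volume) mp.measurable.aemeasurable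
      (f := fun z : ℝ × ℝ => p z.1 * q z.2) (by rw [mp.map_eq]; exact Fint.aestronglyMeasurable)
    rw [mp.map_eq] at h
    exact h.symm
  have Bint : Integrable (fun z : ℝ × ℝ => p z.1 * q (z.2 - z.1)) (volume.prod volume) :=
    Aint.swap
  have Bval : ∫ z : ℝ × ℝ, p z.1 * q (z.2 - z.1) ∂(volume.prod volume)
      = 1/2 * Real.Gamma (2*H-1) := by
    rw [← Aval]
    exact integral_prod_swap (fun z : ℝ × ℝ => p z.2 * q (z.1 - z.2))
  have key : ∀ u s : ℝ, (Ioi (0:ℝ)).indicator (fun u => (Ioi (0:ℝ)).indicator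
      (fun s => Real.exp (-(s+u)) * |u - s| ^ (2*H - 2)) s) u
      = p s * q (u - s) + p u * q (s - u) := by
    intro u s
    simp only [hp, hq, indicator_apply, mem_Ioi, sub_pos]
    rcases lt_trichotomy s u with h | h | h
    · rw [if_pos h, if_neg h.not_gt, abs_of_pos (sub_pos.2 h), mul_zero, add_zero]
      by_cases hs : 0 < s
      · rw [if_pos (hs.trans h), if_pos hs, if_pos hs, ← mul_assoc, ← Real.exp_add]
        ring_nf
      · simp [hs]
    · subst h
      simp [Real.zero_rpow (show 2*H-2 ≠ 0 by linarith)]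
    · rw [if_pos h, if_neg h.not_gt, abs_sub_comm, abs_of_pos (sub_pos.2 h), mul_zero, zero_add]
      by_cases hs : 0 < u
      · rw [if_pos (hs.trans h), if_pos hs, if_pos hs, ← mul_assoc, ← Real.exp_add]
        ring_nf
      · simp [hs]
  have main : ∫ u in Ioi (0:ℝ), ∫ s in Ioi (0:ℝ),
      Real.exp (-(s+u)) * |u - s| ^ (2*H - 2) = Real.Gamma (2*H-1) := by
    rw [← integral_indicator measurableSet_Ioi]
    have e : ∀ u : ℝ, (Ioi (0:ℝ)).indicator (fun u => ∫ s in Ioi (0:ℝ),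
        Real.exp (-(s+u)) * |u - s| ^ (2*H - 2)) u
        = ∫ s, (p s * q (u - s) + p u * q (s - u)) := by
      intro u
      simp_rw [← key]
      by_cases hu : u ∈ Ioi (0:ℝ)
      · simp only [indicator_of_mem hu]
        rw [integral_indicator measurableSet_Ioi]
      · simp only [indicator_of_notMem hu, integral_zero]
    simp_rw [e]
    have := integral_prod _ (Aint.add Bint)
    simp only [Pi.add_apply] at this
    rw [← this, integral_add Aint Bint, Aval, Bval]
    ring
  rw [main, ← Real.Gamma_add_one (by linarith)]
  ring_nf
end

section
/- For every real number H with 1/2 < H < 1 and every real θ > 0, one has (2H-1) · ∫₀^∞ ∫₀^∞ e^{-θ(s+u)} |u-s|^{2H-2} ds du = θ^{-2H} Γ(2H). (Equivalently, H(2H-1) times the double integral equals θ^{-2H} H Γ(2H), which is the variance of the stationary fractional Ornstein–Uhlenbeck process with σ = 1.) -/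
open MeasureTheory Real Set

theorem stmt_1 (H θ : ℝ) (h1 : 1/2 < H) (h2 : H < 1) (hθ : 0 < θ) :
    (2*H - 1) * ∫ u in Ioi (0:ℝ), ∫ s in Ioi (0:ℝ),
      Real.exp (-θ*(s+u)) * |u - s| ^ (2*H - 2)
      = θ ^ (-(2*H)) * Real.Gamma (2*H) := by
  set f : ℝ → ℝ := (Ioi (0:ℝ)).indicator (fun s => Real.exp (-(2*θ) * s)) with hf
  set g : ℝ → ℝ := (Ioi (0:ℝ)).indicator
    (fun s => s ^ (2*H-2) * Real.exp (-θ * s)) with hg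
  have hfi0 : IntegrableOn (fun s => Real.exp (-(2*θ) * s)) (Ioi (0:ℝ)) :=
    integrableOn_exp_mul_Ioi (by linarith) 0
  have hfi : Integrable f := hfi0.integrable_indicator measurableSet_Ioi
  have hgi : Integrable g := by
    refine IntegrableOn.integrable_indicator ?_ measurableSet_Ioi
    have := integrableOn_rpow_mul_exp_neg_mul_rpow (p := 1) (s := 2*H-2) (b := θ)
      (by linarith) one_pos hθ
    simpa using this
  have hfI : ∫ s, f s = 1 / (2*θ) := by
    rw [hf, integral_indicator measurableSet_Ioi, integral_exp_mul_Ioi (by linarith)]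
    simp
  have hgI : ∫ s, g s = θ ^ (-(2*H-1)) * Real.Gamma (2*H-1) := by
    rw [hg, integral_indicator measurableSet_Ioi]
    have := integral_rpow_mul_exp_neg_mul_rpow (p := 1) (q := 2*H-2) (b := θ)
      one_pos (by linarith) hθ
    simp only [rpow_one] at this
    rw [this]
    have e : 2*H-2+1 = 2*H-1 := by ring
    simp [e]
  have hconv := hfi.integrable_convolution (ContinuousLinearMap.mul ℝ ℝ) hgi
  have hconvI := integral_convolution (ContinuousLinearMap.mul ℝ ℝ) hfi hgi
  have hae := hfi.ae_convolution_exists (ContinuousLinearMap.mul ℝ ℝ) hgi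
  have hpt : ∀ u ∈ Ioi (0:ℝ), ∀ s, (Ioi (0:ℝ)).indicator
      (fun s => Real.exp (-θ*(s+u)) * |u - s| ^ (2*H - 2)) s
      = f s * g (u - s) + Real.exp (-(2*θ)*u) * g (s - u) := by
    intro u hu s
    have hu : 0 < u := hu
    rcases lt_trichotomy s u with h | h | h
    · have hg0 : g (s - u) = 0 := indicator_of_notMem (by simp; linarith) _
      have hg1 : g (u - s) = (u-s) ^ (2*H-2) * Real.exp (-θ * (u-s)) :=
        indicator_of_mem (by simp; linarith) _
      rw [hg0, hg1]
      by_cases hs : s ∈ Ioi (0:ℝ)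
      · rw [hf, indicator_of_mem hs, indicator_of_mem hs, abs_of_pos (by linarith)]
        have : Real.exp (-θ*(s+u)) = Real.exp (-(2*θ)*s) * Real.exp (-θ * (u-s)) := by
          rw [← Real.exp_add]; ring_nf
        rw [this]; ring
      · rw [hf, indicator_of_notMem hs, indicator_of_notMem hs]; simp
    · subst h
      have : (0:ℝ) ^ (2*H-2) = 0 := Real.zero_rpow (by linarith)
      simp [hg, indicator, this]
    · have hg0 : g (u - s) = 0 := indicator_of_notMem (by simp; linarith) _
      have hg1 : g (s - u) = (s-u) ^ (2*H-2) * Real.exp (-θ * (s-u)) :=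
        indicator_of_mem (by simp; linarith) _
      rw [hg0, hg1, indicator_of_mem (show s ∈ Ioi (0:ℝ) from hu.trans h),
        abs_sub_comm, abs_of_pos (by linarith)]
      have : Real.exp (-θ*(s+u)) = Real.exp (-(2*θ)*u) * Real.exp (-θ * (s-u)) := by
        rw [← Real.exp_add]; ring_nf
      rw [this]; ring
  have hin : ∫ u in Ioi (0:ℝ), ∫ s in Ioi (0:ℝ),
      Real.exp (-θ*(s+u)) * |u - s| ^ (2*H - 2)
      = ∫ u in Ioi (0:ℝ), ((∫ s, f s * g (u - s)) + Real.exp (-(2*θ)*u) * ∫ s, g s) := by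
    refine setIntegral_congr_ae measurableSet_Ioi ?_
    filter_upwards [hae] with u hu hu0
    rw [← integral_indicator measurableSet_Ioi, integral_congr_ae
      (Filter.Eventually.of_forall (hpt u hu0)), integral_add, integral_const_mul,
      integral_sub_right_eq_self g u]
    · exact hu
    · exact (hgi.comp_sub_right u).const_mul _
  have hc1 : Integrable (fun u => ∫ s, f s * g (u - s)) := hconv
  have hc2 : ∫ u, ∫ s, f s * g (u - s) = (∫ s, f s) * ∫ s, g s := hconvI
  have hc3 : ∫ u in Ioi (0:ℝ), ∫ s, f s * g (u - s) = (∫ s, f s) * ∫ s, g s := by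
    rw [← hc2]
    refine setIntegral_eq_integral_of_forall_compl_eq_zero ?_
    intro u hu
    have hu : u ≤ 0 := by simpa using hu
    refine integral_eq_zero_of_ae (Filter.Eventually.of_forall fun s => ?_)
    by_cases hs : s ∈ Ioi (0:ℝ)
    · have hs' : 0 < s := hs
      have hg0 : g (u - s) = 0 := indicator_of_notMem (by simp; linarith) _
      simp [hg0]
    · simp [hf, indicator_of_notMem hs]
  rw [hin, integral_add hc1.integrableOn (hfi0.mul_const _), hc3, integral_mul_const,
    ← integral_indicator measurableSet_Ioi, ← hf, hfI, hgI]
  have hG : Real.Gamma (2*H) = (2*H-1) * Real.Gamma (2*H-1) := by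
    rw [← Real.Gamma_add_one (by linarith)]; ring_nf
  have hT : θ ^ (-(2*H-1)) = θ ^ (-(2*H)) * θ := by
    rw [← Real.rpow_add_one hθ.ne']; ring_nf
  rw [hG, hT]
  field_simp
  ring
end

section
/- Let 1/2 < H < 3/4 and θ > 0. For T > 0 define I_T = ∫_{[0,T]⁴} e^{-θ|s₂-u₂| - θ|s₁-u₁|} |s₂-s₁|^{2H-2} |u₂-u₁|^{2H-2} du₁ du₂ ds₁ ds₂. Then lim_{T→∞} I_T / T = θ^{1-4H} γ_H, where γ_H = (8H-2) Γ(2H-1)² + (16H-4) Γ(2H-1) Γ(3-4H) Γ(4H-2) / Γ(2-2H). -/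
open MeasureTheory Real Set Filter

lemma lint_of_int {α : Type*} [MeasurableSpace α] {μ : Measure α} {f : α → ℝ} {c : ℝ}
    (hf : 0 ≤ᵐ[μ] f) (hc : 0 < c) (h : ∫ x, f x ∂μ = c) :
    ∫⁻ x, ENNReal.ofReal (f x) ∂μ = ENNReal.ofReal c := by
  have hi : Integrable f μ := Integrable.of_integral_ne_zero (by rw [h]; exact hc.ne')
  rw [← ofReal_integral_eq_lintegral_ofReal hi hf, h]

lemma lint_gamma {s r : ℝ} (hs : 0 < s) (hr : 0 < r) :
    ∫⁻ x in Ioi (0:ℝ), ENNReal.ofReal (x ^ (s - 1) * Real.exp (-(r * x))) =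
      ENNReal.ofReal (r ^ (-s) * Real.Gamma s) := by
  refine lint_of_int ?_ ?_ ?_
  · refine ae_restrict_of_forall_mem measurableSet_Ioi fun x hx => ?_
    have : (0:ℝ) < x := hx
    simp only [Pi.zero_apply]; positivity
  · have := Real.Gamma_pos_of_pos hs
    positivity
  · rw [Real.integral_rpow_mul_exp_neg_mul_Ioi hs hr, one_div, Real.inv_rpow hr.le,
      Real.rpow_neg hr.le]

lemma lint_scale {c : ℝ} (hc : c ≠ 0) {φ : ℝ → ENNReal} (hφ : Measurable φ) :
    ∫⁻ x, φ x = ENNReal.ofReal |c| * ∫⁻ x, φ (c * x) := by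
  have h := Real.smul_map_volume_mul_left hc
  conv_lhs => rw [← h]
  rw [lintegral_smul_measure, lintegral_map hφ (by fun_prop)]
  rfl

lemma lint_beta {α β : ℝ} (hα : 0 < α) (hβ : 0 < β) :
    ∫⁻ x in Ioo (0:ℝ) 1, ENNReal.ofReal (x ^ (α - 1) * (1 - x) ^ (β - 1)) =
      ENNReal.ofReal (Real.Gamma α * Real.Gamma β / Real.Gamma (α + β)) := by
  have h := ProbabilityTheory.lintegral_betaPDF_eq_one hα hβ
  have hb := ProbabilityTheory.beta_pos hα hβ
  rw [ProbabilityTheory.lintegral_betaPDF] at h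
  simp_rw [mul_assoc, ENNReal.ofReal_mul (one_div_pos.2 hb).le] at h
  rw [lintegral_const_mul _ (by fun_prop)] at h
  change _ = ENNReal.ofReal (ProbabilityTheory.beta α β)
  calc _ = ENNReal.ofReal (ProbabilityTheory.beta α β) * (ENNReal.ofReal (1 / ProbabilityTheory.beta α β) * ∫⁻ x in Ioo (0:ℝ) 1, ENNReal.ofReal (x ^ (α - 1) * (1 - x) ^ (β - 1))) := by
        rw [← mul_assoc, ← ENNReal.ofReal_mul hb.le, mul_one_div_cancel hb.ne']; simp
    _ = _ := by rw [h, mul_one]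

/-- tail beta integral -/
lemma lint_tail {a : ℝ} (h1 : -1 < a) (h2 : a < -1/2) :
    ∫⁻ v in Ioi (0:ℝ), ENNReal.ofReal (v ^ a * (1 + v) ^ a) =
      ENNReal.ofReal (Real.Gamma (a + 1) * Real.Gamma (-2*a - 1) / Real.Gamma (-a)) := by
  have hG : 0 < Real.Gamma (-a) := Real.Gamma_pos_of_pos (by linarith)
  have hG1 : 0 < Real.Gamma (a+1) := Real.Gamma_pos_of_pos (by linarith)
  have key : ∫⁻ v in Ioi (0:ℝ), ∫⁻ s in Ioi (0:ℝ),
      ENNReal.ofReal (v ^ a * (s ^ (-a - 1) * Real.exp (-((1 + v) * s)))) =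
      ENNReal.ofReal (Real.Gamma (-a)) *
        ∫⁻ v in Ioi (0:ℝ), ENNReal.ofReal (v ^ a * (1 + v) ^ a) := by
    rw [← lintegral_const_mul _ (by fun_prop)]
    refine setLIntegral_congr_fun measurableSet_Ioi fun v hv => ?_
    have hv : (0:ℝ) < v := hv
    simp_rw [ENNReal.ofReal_mul (Real.rpow_nonneg hv.le a)]
    rw [lintegral_const_mul _ (by fun_prop), lint_gamma (by linarith) (by linarith),
      ENNReal.ofReal_mul (by positivity), neg_neg]
    ring
  have key2 : ∫⁻ v in Ioi (0:ℝ), ∫⁻ s in Ioi (0:ℝ),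
      ENNReal.ofReal (v ^ a * (s ^ (-a - 1) * Real.exp (-((1 + v) * s)))) =
      ENNReal.ofReal (Real.Gamma (a + 1) * Real.Gamma (-2*a - 1)) := by
    rw [lintegral_lintegral_swap (by apply Measurable.aemeasurable; unfold Function.uncurry; fun_prop)]
    have : ∀ s ∈ Ioi (0:ℝ), ∫⁻ v in Ioi (0:ℝ),
      ENNReal.ofReal (v ^ a * (s ^ (-a - 1) * Real.exp (-((1 + v) * s)))) =
       ENNReal.ofReal (Real.Gamma (a+1)) * ENNReal.ofReal (s ^ ((-2*a - 1) - 1) * Real.exp (-(1 * s))) := by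
      intro s hs
      have hs : (0:ℝ) < s := hs
      have e : ∀ v : ℝ, v ^ a * (s ^ (-a - 1) * Real.exp (-((1 + v) * s))) =
        (s ^ (-a - 1) * Real.exp (-(1 * s))) * (v ^ ((a + 1) - 1) * Real.exp (-(s * v))) := by
        intro v
        have : -((1 + v) * s) = -(1 * s) + -(s * v) := by ring
        rw [this, Real.exp_add]; ring_nf
      simp_rw [e]
      simp_rw [ENNReal.ofReal_mul (show 0 ≤ s ^ (-a - 1) * Real.exp (-(1 * s)) by positivity)]
      rw [lintegral_const_mul _ (by fun_prop), lint_gamma (by linarith) hs,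
        ← ENNReal.ofReal_mul (by positivity), ← ENNReal.ofReal_mul (by positivity)]
      congr 1
      have : s ^ ((-2*a - 1) - 1) = s ^ (-a-1) * s ^ (-(a+1)) := by
        rw [← Real.rpow_add hs]; congr 1; ring
      rw [this]; ring
    rw [setLIntegral_congr_fun measurableSet_Ioi this, lintegral_const_mul _ (by fun_prop),
      lint_gamma (by linarith) one_pos, ← ENNReal.ofReal_mul hG1.le]
    simp
  rw [key] at key2
  rw [ENNReal.ofReal_div_of_pos hG, ← key2, mul_comm, ENNReal.mul_div_cancel_right]
  · simpa using hG
  · simp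

lemma lint_split01 (φ : ℝ → ENNReal) :
    ∫⁻ x, φ x = (∫⁻ x in Iio (0:ℝ), φ x) + (∫⁻ x in Ioo (0:ℝ) 1, φ x) + ∫⁻ x in Ioi (1:ℝ), φ x := by
  rw [← lintegral_add_compl φ (measurableSet_Iio (a := (0:ℝ))), compl_Iio,
    setLIntegral_congr (Ioi_ae_eq_Ici (a := (0:ℝ))).symm,
    ← Ioc_union_Ioi_eq_Ioi (zero_le_one (α := ℝ)), lintegral_union measurableSet_Ioi,
    setLIntegral_congr Ioo_ae_eq_Ioc.symm, add_assoc]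
  exact Ioc_disjoint_Ioi le_rfl

lemma setlint_shift (φ : ℝ → ENNReal) (c : ℝ) :
    ∫⁻ x in Ioi c, φ x = ∫⁻ x in Ioi (0:ℝ), φ (x + c) := by
  rw [← lintegral_indicator measurableSet_Ioi, ← lintegral_indicator measurableSet_Ioi,
    ← lintegral_add_right_eq_self _ c]
  congr 1; ext x; simp [indicator]

lemma setlint_neg (φ : ℝ → ENNReal) :
    ∫⁻ x in Iio (0:ℝ), φ x = ∫⁻ x in Ioi (0:ℝ), φ (-x) := by
  rw [← lintegral_indicator measurableSet_Ioi, ← lintegral_indicator measurableSet_Iio,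
    ← lintegral_neg_eq_self]
  congr 1; ext x; simp [indicator]

noncomputable def CC (a : ℝ) : ℝ := Real.Gamma (a+1) * Real.Gamma (a+1) / Real.Gamma ((a+1)+(a+1)) +
  2 * (Real.Gamma (a + 1) * Real.Gamma (-2*a - 1) / Real.Gamma (-a))

lemma lint_C {a : ℝ} (h1 : -1 < a) (h2 : a < -1/2) :
    ∫⁻ x : ℝ, ENNReal.ofReal (|1 - x| ^ a * |x| ^ a) = ENNReal.ofReal (CC a) := by
  have hG : 0 < Real.Gamma (-a) := Real.Gamma_pos_of_pos (by linarith)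
  have hG1 : 0 < Real.Gamma (a+1) := Real.Gamma_pos_of_pos (by linarith)
  have hG2 : 0 < Real.Gamma (a+1+(a+1)) := Real.Gamma_pos_of_pos (by linarith)
  have hG3 : 0 < Real.Gamma (-2*a-1) := Real.Gamma_pos_of_pos (by linarith)
  rw [lint_split01, setlint_neg, setlint_shift _ 1]
  have e1 : ∫⁻ x in Ioi (0:ℝ), ENNReal.ofReal (|1 - -x| ^ a * |-x| ^ a) =
      ENNReal.ofReal (Real.Gamma (a + 1) * Real.Gamma (-2*a - 1) / Real.Gamma (-a)) := by
    rw [← lint_tail h1 h2]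
    refine setLIntegral_congr_fun measurableSet_Ioi fun v hv => ?_
    have hv : (0:ℝ) < v := hv
    rw [abs_neg, abs_of_pos hv, sub_neg_eq_add, abs_of_pos (by linarith), mul_comm]
  have e2 : ∫⁻ x in Ioi (0:ℝ), ENNReal.ofReal (|1 - (x + 1)| ^ a * |x + 1| ^ a) =
      ENNReal.ofReal (Real.Gamma (a + 1) * Real.Gamma (-2*a - 1) / Real.Gamma (-a)) := by
    rw [← lint_tail h1 h2]
    refine setLIntegral_congr_fun measurableSet_Ioi fun v hv => ?_
    have hv : (0:ℝ) < v := hv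
    rw [show 1 - (v+1) = -v by ring, abs_neg, abs_of_pos hv, abs_of_pos (by linarith), add_comm 1 v]
  have e3 : ∫⁻ x in Ioo (0:ℝ) 1, ENNReal.ofReal (|1 - x| ^ a * |x| ^ a) =
      ENNReal.ofReal (Real.Gamma (a+1) * Real.Gamma (a+1) / Real.Gamma ((a+1)+(a+1))) := by
    rw [← lint_beta (show 0 < a + 1 by linarith) (show 0 < a + 1 by linarith)]
    refine setLIntegral_congr_fun measurableSet_Ioo fun v hv => ?_
    rw [abs_of_pos hv.1, abs_of_pos (by linarith [hv.2]), mul_comm]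
    simp
  rw [e1, e2, e3, ← ENNReal.ofReal_add (by positivity) (by positivity),
    ← ENNReal.ofReal_add (by positivity) (by positivity), CC]
  congr 1; ring

lemma lint_gg {a : ℝ} (h1 : -1 < a) (h2 : a < -1/2) {w : ℝ} (hw : w ≠ 0) :
    ∫⁻ x : ℝ, ENNReal.ofReal (|w - x| ^ a) * ENNReal.ofReal (|x| ^ a) =
      ENNReal.ofReal (CC a * |w| ^ (2*a+1)) := by
  have hw' := abs_pos.2 hw
  have hC : 0 ≤ CC a := by
    have hG : 0 < Real.Gamma (-a) := Real.Gamma_pos_of_pos (by linarith)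
    have hG1 : 0 < Real.Gamma (a+1) := Real.Gamma_pos_of_pos (by linarith)
    have hG2 : 0 < Real.Gamma (a+1+(a+1)) := Real.Gamma_pos_of_pos (by linarith)
    have hG3 : 0 < Real.Gamma (-2*a-1) := Real.Gamma_pos_of_pos (by linarith)
    unfold CC; positivity
  rw [lint_scale hw (by fun_prop)]
  have e : ∀ x : ℝ, ENNReal.ofReal (|w - w * x| ^ a) * ENNReal.ofReal (|w * x| ^ a) =
      ENNReal.ofReal (|w| ^ a * |w| ^ a) * ENNReal.ofReal (|1 - x| ^ a * |x| ^ a) := by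
    intro x
    rw [← ENNReal.ofReal_mul (by positivity), ← ENNReal.ofReal_mul (by positivity),
      show w - w * x = w * (1 - x) by ring, abs_mul, abs_mul, Real.mul_rpow (abs_nonneg _) (abs_nonneg _),
      Real.mul_rpow (abs_nonneg _) (abs_nonneg _)]
    congr 1; ring
  simp_rw [e]
  rw [lintegral_const_mul _ (by fun_prop), lint_C h1 h2, ← ENNReal.ofReal_mul (by positivity),
    ← ENNReal.ofReal_mul (by positivity)]
  congr 1
  rw [show 2*a+1 = 1 + a + a by ring, Real.rpow_add hw', Real.rpow_add hw', Real.rpow_one]; ring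

lemma lint_exp {r : ℝ} (hr : 0 < r) :
    ∫⁻ x in Ioi (0:ℝ), ENNReal.ofReal (Real.exp (-(r * x))) = ENNReal.ofReal (r⁻¹) := by
  have := lint_gamma one_pos hr
  simpa [Real.rpow_neg_one] using this

lemma lint_ff_pos {θ : ℝ} (hθ : 0 < θ) {w : ℝ} (hw : 0 < w) :
    ∫⁻ y : ℝ, ENNReal.ofReal (Real.exp (-(θ * |w - y|))) * ENNReal.ofReal (Real.exp (-(θ * |y|))) =
      ENNReal.ofReal (Real.exp (-(θ * w)) * (w + θ⁻¹)) := by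
  have hs : ∀ φ : ℝ → ENNReal, 
    ∫⁻ x, φ x = (∫⁻ x in Iio (0:ℝ), φ x) + (∫⁻ x in Ioc (0:ℝ) w, φ x) + ∫⁻ x in Ioi w, φ x := by
    intro φ
    rw [← lintegral_add_compl φ (measurableSet_Iio (a := (0:ℝ))), compl_Iio,
      setLIntegral_congr (Ioi_ae_eq_Ici (a := (0:ℝ))).symm,
      ← Ioc_union_Ioi_eq_Ioi hw.le, lintegral_union measurableSet_Ioi,
      add_assoc]
    exact Ioc_disjoint_Ioi le_rfl
  simp_rw [← ENNReal.ofReal_mul (Real.exp_pos _).le, ← Real.exp_add]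
  rw [hs, setlint_neg, setlint_shift _ w]
  have e1 : ∫⁻ x in Ioi (0:ℝ), ENNReal.ofReal (Real.exp (-(θ * |w - -x|) + -(θ * |-x|))) =
      ENNReal.ofReal (Real.exp (-(θ * w))) * ENNReal.ofReal (2 * θ)⁻¹ := by
    rw [← lint_exp (by positivity), ← lintegral_const_mul _ (by fun_prop)]
    refine setLIntegral_congr_fun measurableSet_Ioi fun v hv => ?_
    have hv : (0:ℝ) < v := hv
    rw [abs_neg, abs_of_pos hv, sub_neg_eq_add, abs_of_pos (by linarith),
      ← ENNReal.ofReal_mul (Real.exp_pos _).le, ← Real.exp_add]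
    congr 2; ring
  have e2 : ∫⁻ x in Ioi (0:ℝ), ENNReal.ofReal (Real.exp (-(θ * |w - (x+w)|) + -(θ * |x+w|))) =
      ENNReal.ofReal (Real.exp (-(θ * w))) * ENNReal.ofReal (2 * θ)⁻¹ := by
    rw [← lint_exp (by positivity), ← lintegral_const_mul _ (by fun_prop)]
    refine setLIntegral_congr_fun measurableSet_Ioi fun v hv => ?_
    have hv : (0:ℝ) < v := hv
    rw [show w - (v+w) = -v by ring, abs_neg, abs_of_pos hv, abs_of_pos (by linarith),
      ← ENNReal.ofReal_mul (Real.exp_pos _).le, ← Real.exp_add]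
    congr 2; ring
  have e3 : ∫⁻ x in Ioc (0:ℝ) w, ENNReal.ofReal (Real.exp (-(θ * |w - x|) + -(θ * |x|))) =
      ENNReal.ofReal (Real.exp (-(θ * w))) * ENNReal.ofReal w := by
    have : ∀ x ∈ Ioc (0:ℝ) w, ENNReal.ofReal (Real.exp (-(θ * |w - x|) + -(θ * |x|))) = 
      ENNReal.ofReal (Real.exp (-(θ * w))) := by
      intro x hx
      rw [abs_of_pos hx.1, abs_of_nonneg (by linarith [hx.2])]
      congr 2; ring
    rw [setLIntegral_congr_fun measurableSet_Ioc this]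
    simp
  rw [e1, e2, e3, ← mul_add, ← mul_add, ← ENNReal.ofReal_add (by positivity) (by positivity),
    ← ENNReal.ofReal_add (by positivity) (by positivity), ← ENNReal.ofReal_mul (by positivity)]
  congr 2; field_simp; ring

lemma lint_ff {θ : ℝ} (hθ : 0 < θ) {w : ℝ} (hw : w ≠ 0) :
    ∫⁻ y : ℝ, ENNReal.ofReal (Real.exp (-(θ * |w - y|))) * ENNReal.ofReal (Real.exp (-(θ * |y|))) =
      ENNReal.ofReal (Real.exp (-(θ * |w|)) * (|w| + θ⁻¹)) := by
  rcases hw.lt_or_gt with h | h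
  · rw [abs_of_neg h, ← lint_ff_pos hθ (show 0 < -w by linarith), ← lintegral_neg_eq_self]
    congr 1; ext y
    rw [abs_neg, show w - -y = -(-w - y) by ring, abs_neg]
  · rw [abs_of_pos h, lint_ff_pos hθ h]

lemma lint_final {a θ : ℝ} (hθ : 0 < θ) (h1 : -1 < a) :
    ∫⁻ w : ℝ, ENNReal.ofReal (Real.exp (-(θ * |w|)) * (|w| + θ⁻¹) * |w| ^ (2*a+1)) =
      ENNReal.ofReal (2 * (θ ^ (-(2*a+3)) * ((2*a+3) * Real.Gamma (2*a+2)))) := by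
  have hsplit : ∀ φ : ℝ → ENNReal, ∫⁻ w, φ |w| = 2 * ∫⁻ w in Ioi (0:ℝ), φ w := by
    intro φ
    rw [← lintegral_add_compl _ (measurableSet_Iio (a := (0:ℝ))), compl_Iio,
      setLIntegral_congr (Ioi_ae_eq_Ici (a := (0:ℝ))).symm, setlint_neg, two_mul]
    congr 1 <;>
    · refine setLIntegral_congr_fun measurableSet_Ioi fun v hv => ?_
      have hv : (0:ℝ) < v := hv
      simp [abs_of_pos hv]
  rw [hsplit (fun w => ENNReal.ofReal (Real.exp (-(θ * w)) * (w + θ⁻¹) * w ^ (2*a+1)))]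
  have hG : 0 < Real.Gamma (2*a+2) := Real.Gamma_pos_of_pos (by linarith)
  have hG3 : Real.Gamma (2*a+3) = (2*a+2) * Real.Gamma (2*a+2) := by
    rw [← Real.Gamma_add_one (by linarith)]; congr 1; ring
  have h3 : 0 < 2*a+2 := by linarith
  have h4 : 0 < 2*a+3 := by linarith
  have e : ∫⁻ w in Ioi (0:ℝ), ENNReal.ofReal (Real.exp (-(θ * w)) * (w + θ⁻¹) * w ^ (2*a+1)) =
    ∫⁻ w in Ioi (0:ℝ), (ENNReal.ofReal (w ^ ((2*a+3) - 1) * Real.exp (-(θ * w))) +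
      ENNReal.ofReal θ⁻¹ * ENNReal.ofReal (w ^ ((2*a+2) - 1) * Real.exp (-(θ * w)))) := by
    refine setLIntegral_congr_fun measurableSet_Ioi fun w hw => ?_
    have hw : (0:ℝ) < w := hw
    rw [← ENNReal.ofReal_mul (by positivity), ← ENNReal.ofReal_add (by positivity) (by positivity),
      show 2*a+3-1 = (2*a+1) + 1 by ring, show 2*a+2-1 = 2*a+1 by ring, Real.rpow_add hw (2*a+1) 1,
      Real.rpow_one]
    congr 1; ring
  rw [e, lintegral_add_left (by fun_prop), lintegral_const_mul _ (by fun_prop), lint_gamma h4 hθ,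
    lint_gamma h3 hθ, ← ENNReal.ofReal_mul (by positivity), hG3,
    ← ENNReal.ofReal_add (by positivity) (by positivity),
    show (2:ENNReal) = ENNReal.ofReal 2 by simp, ← ENNReal.ofReal_mul (by positivity)]
  congr 2
  rw [show -(2*a+3) = -(2*a+2) + -1 by ring, Real.rpow_add hθ, Real.rpow_neg_one]
  ring

/-- The integrand after fixing the first variable. -/
noncomputable def hh (a θ : ℝ) (q : ℝ × ℝ × ℝ) : ENNReal :=
  ENNReal.ofReal (Real.exp (-(θ * |q.1 - q.2.2|))) * ENNReal.ofReal (Real.exp (-(θ * |q.2.1|))) *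
    ENNReal.ofReal (|q.1| ^ a) * ENNReal.ofReal (|q.2.2 - q.2.1| ^ a)

lemma hh_meas (a θ : ℝ) : Measurable (hh a θ) := by
  unfold hh; fun_prop

noncomputable def LL (a θ : ℝ) : ℝ :=
  CC a * (2 * (θ ^ (-(2*a+3)) * ((2*a+3) * Real.Gamma (2*a+2))))

lemma CC_nonneg {a : ℝ} (h1 : -1 < a) (h2 : a < -1/2) : 0 ≤ CC a := by
  have hG : 0 < Real.Gamma (-a) := Real.Gamma_pos_of_pos (by linarith)
  have hG1 : 0 < Real.Gamma (a+1) := Real.Gamma_pos_of_pos (by linarith)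
  have hG2 : 0 < Real.Gamma (a+1+(a+1)) := Real.Gamma_pos_of_pos (by linarith)
  have hG3 : 0 < Real.Gamma (-2*a-1) := Real.Gamma_pos_of_pos (by linarith)
  unfold CC; positivity

lemma lint_hh {a θ : ℝ} (hθ : 0 < θ) (h1 : -1 < a) (h2 : a < -1/2) :
    ∫⁻ q, hh a θ q = ENNReal.ofReal (LL a θ) := by
  set f : ℝ → ENNReal := fun y => ENNReal.ofReal (Real.exp (-(θ * |y|))) with hf
  set g : ℝ → ENNReal := fun y => ENNReal.ofReal (|y| ^ a) with hg
  have mf : Measurable f := by fun_prop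
  have mg : Measurable g := by fun_prop
  have s1 : ∫⁻ q, hh a θ q = ∫⁻ x, ∫⁻ y, ∫⁻ z, f (x - z) * f y * g x * g (z - y) := by
    rw [Measure.volume_eq_prod, lintegral_prod _ (hh_meas a θ).aemeasurable]
    refine lintegral_congr fun x => ?_
    rw [Measure.volume_eq_prod, lintegral_prod (fun y : ℝ × ℝ => hh a θ (x, y))
      ((hh_meas a θ).comp (by fun_prop : Measurable fun y : ℝ × ℝ => (x, y))).aemeasurable]
    rfl
  have s2 : ∀ x y, ∫⁻ z, f (x - z) * f y * g x * g (z - y) =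
      ∫⁻ v, f (x - v - y) * f y * (g x * g v) := by
    intro x y
    rw [← lintegral_add_right_eq_self _ y]
    refine lintegral_congr fun v => ?_
    rw [show x - (v + y) = x - v - y by ring, show v + y - y = v by ring]; ring
  have s3 : ∀ x, ∫⁻ y, ∫⁻ v, f (x - v - y) * f y * (g x * g v) =
      ∫⁻ v, (∫⁻ y, f (x - v - y) * f y) * (g x * g v) := by
    intro x
    rw [lintegral_lintegral_swap (by apply Measurable.aemeasurable; unfold Function.uncurry; fun_prop)]
    refine lintegral_congr fun v => ?_
    rw [lintegral_mul_const _ (by fun_prop)]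
  set F : ℝ → ENNReal := fun w => ∫⁻ y, f (w - y) * f y with hF
  have mF : Measurable F := by
    apply Measurable.lintegral_prod_right' (f := fun p : ℝ × ℝ => f (p.1 - p.2) * f p.2)
    fun_prop
  have s4 : ∫⁻ x, ∫⁻ v, F (x - v) * (g x * g v) = ∫⁻ w, F w * ∫⁻ x, g (w - x) * g x := by
    have : ∀ x, ∫⁻ v, F (x - v) * (g x * g v) = ∫⁻ w, F w * (g (w - x) * g x) := by
      intro x
      rw [← lintegral_sub_left_eq_self _ x]
      refine lintegral_congr fun w => ?_
      rw [sub_sub_cancel, mul_comm (g x)]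
      have : g (x - w) = g (w - x) := by simp only [hg, abs_sub_comm]
      rw [this]
    simp_rw [this]
    rw [lintegral_lintegral_swap (by apply Measurable.aemeasurable; unfold Function.uncurry; fun_prop)]
    refine lintegral_congr fun v => ?_
    rw [lintegral_const_mul _ (by fun_prop)]
  have s5 : ∫⁻ w, F w * ∫⁻ x, g (w - x) * g x = ∫⁻ w : ℝ, ENNReal.ofReal (CC a) *
      ENNReal.ofReal (Real.exp (-(θ * |w|)) * (|w| + θ⁻¹) * |w| ^ (2*a+1)) := by
    refine lintegral_congr_ae ?_
    have : ∀ᵐ w : ℝ, w ≠ 0 := by simp [ae_iff]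
    filter_upwards [this] with w hw
    rw [hF]
    simp only [hf, hg]
    rw [lint_ff hθ hw, lint_gg h1 h2 hw, ← ENNReal.ofReal_mul (by positivity),
      ← ENNReal.ofReal_mul (CC_nonneg h1 h2)]
    congr 1; ring
  rw [s1]
  simp_rw [s2, s3]
  rw [s4, s5, lintegral_const_mul _ (by fun_prop), lint_final hθ h1,
    ← ENNReal.ofReal_mul (CC_nonneg h1 h2), LL]

/-- Integrand on R^4. -/
noncomputable def FF (a θ : ℝ) (p : ℝ × ℝ × ℝ × ℝ) : ℝ :=
  Real.exp (-θ * |p.2.1 - p.2.2.2| - θ * |p.1 - p.2.2.1|) *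
          |p.2.1 - p.1| ^ a * |p.2.2.2 - p.2.2.1| ^ a

lemma FF_meas (a θ : ℝ) : Measurable (FF a θ) := by
  unfold FF; fun_prop

lemma FF_hh (a θ t : ℝ) (q : ℝ × ℝ × ℝ) :
    ENNReal.ofReal (FF a θ (t, q + (t, t, t))) = hh a θ q := by
  obtain ⟨x, y, z⟩ := q
  simp only [FF, hh, Prod.mk_add_mk]
  rw [← ENNReal.ofReal_mul (by positivity), ← ENNReal.ofReal_mul (by positivity),
    ← ENNReal.ofReal_mul (by positivity), ← Real.exp_add, show x + t - (z + t) = x - z by ring,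
    show t - (y + t) = -y by ring, show x + t - t = x by ring,
    show z + t - (y + t) = z - y by ring, abs_neg]
  congr 4; ring

lemma cube_eq (a θ : ℝ) {T : ℝ} (hT : 0 < T) :
    ∫⁻ p in (Icc (0:ℝ) T) ×ˢ (Icc (0:ℝ) T) ×ˢ (Icc (0:ℝ) T) ×ˢ (Icc (0:ℝ) T),
      ENNReal.ofReal (FF a θ p) =
    ENNReal.ofReal T * ∫⁻ p : ℝ × ℝ × ℝ × ℝ, 
      ((Icc (0:ℝ) 1) ×ˢ univ ∩ {p | p.2 + (T * p.1, T * p.1, T * p.1) ∈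
        Icc (0:ℝ) T ×ˢ Icc (0:ℝ) T ×ˢ Icc (0:ℝ) T}).indicator (fun p => hh a θ p.2) p := by
  have mFF := FF_meas a θ
  have mhh := hh_meas a θ
  set S : Set (ℝ × ℝ × ℝ) := Icc (0:ℝ) T ×ˢ Icc (0:ℝ) T ×ˢ Icc (0:ℝ) T with hS
  have mS : MeasurableSet S := by measurability
  have mI : MeasurableSet (Icc (0:ℝ) T) := measurableSet_Icc
  have mset : MeasurableSet ((Icc (0:ℝ) 1) ×ˢ univ ∩ {p : ℝ × ℝ × ℝ × ℝ | p.2 + (T * p.1, T * p.1, T * p.1) ∈ S}) := by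
    refine (measurableSet_Icc.prod MeasurableSet.univ).inter ?_
    exact measurableSet_preimage (f := fun p : ℝ × ℝ × ℝ × ℝ => p.2 + (T * p.1, T * p.1, T * p.1)) (by fun_prop) mS
  rw [← lintegral_indicator (mI.prod mS), Measure.volume_eq_prod,
    lintegral_prod _ ((by fun_prop : Measurable fun p => ENNReal.ofReal (FF a θ p)).indicator (mI.prod mS)).aemeasurable,
    lintegral_prod _ ((by fun_prop : Measurable fun p : ℝ × ℝ × ℝ × ℝ => hh a θ p.2).indicator mset).aemeasurable,
    lint_scale hT.ne', abs_of_pos hT]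
  · congr 1
    refine lintegral_congr fun t => ?_
    haveI i2 : (volume : Measure (ℝ × ℝ)).IsAddRightInvariant := by
      rw [Measure.volume_eq_prod]; infer_instance
    haveI i3 : (volume : Measure (ℝ × ℝ × ℝ)).IsAddRightInvariant := by
      rw [Measure.volume_eq_prod]; infer_instance
    rw [← lintegral_add_right_eq_self _ ((T * t, T * t, T * t) : ℝ × ℝ × ℝ)]
    refine lintegral_congr fun q => ?_
    have : T * t ∈ Icc (0:ℝ) T ↔ t ∈ Icc (0:ℝ) 1 := by
      simp only [mem_Icc]
      constructor
      · rintro ⟨h1, h2⟩; constructor <;> nlinarith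
      · rintro ⟨h1, h2⟩; constructor <;> nlinarith
    simp only [indicator, mem_prod, mem_inter_iff, mem_univ, and_true, mem_ofPred_eq, this]
    split_ifs
    · exact FF_hh a θ _ q
    · rfl
  · exact ((by fun_prop : Measurable fun p => ENNReal.ofReal (FF a θ p)).indicator (mI.prod mS)).lintegral_prod_right'

lemma lim_lint {a θ : ℝ} (hθ : 0 < θ) (h1 : -1 < a) (h2 : a < -1/2) :
    Tendsto (fun T : ℝ => ∫⁻ p : ℝ × ℝ × ℝ × ℝ, 
      ((Icc (0:ℝ) 1) ×ˢ univ ∩ {p | p.2 + (T * p.1, T * p.1, T * p.1) ∈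
        Icc (0:ℝ) T ×ˢ Icc (0:ℝ) T ×ˢ Icc (0:ℝ) T}).indicator (fun p => hh a θ p.2) p)
      atTop (nhds (ENNReal.ofReal (LL a θ))) := by
  have mhh := hh_meas a θ
  have e : ∫⁻ p : ℝ × ℝ × ℝ × ℝ, ((Icc (0:ℝ) 1) ×ˢ univ).indicator (fun p => hh a θ p.2) p =
      ENNReal.ofReal (LL a θ) := by
    rw [lintegral_indicator (measurableSet_Icc.prod MeasurableSet.univ), Measure.volume_eq_prod,
      setLIntegral_prod _ (by fun_prop)]
    simp [lint_hh hθ h1 h2]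
  rw [← e]
  refine tendsto_lintegral_filter_of_dominated_convergence
    (((Icc (0:ℝ) 1) ×ˢ univ).indicator (fun p => hh a θ p.2)) ?_ ?_ ?_ ?_
  · refine Eventually.of_forall fun T => ?_
    refine (mhh.comp measurable_snd).indicator ?_
    refine (measurableSet_Icc.prod MeasurableSet.univ).inter ?_
    exact measurableSet_preimage (f := fun p : ℝ × ℝ × ℝ × ℝ => p.2 + (T * p.1, T * p.1, T * p.1)) (by fun_prop) (by measurability)
  · refine Eventually.of_forall fun T => Eventually.of_forall fun p => ?_
    exact indicator_le_indicator_of_subset inter_subset_left (fun _ => zero_le) p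
  · rw [e]; simp
  · have hne : ∀ c : ℝ, ∀ᵐ p : ℝ × ℝ × ℝ × ℝ, p.1 ≠ c := by
      intro c
      have : ∀ᵐ w : ℝ, w ≠ c := by simp [ae_iff]
      exact Measure.quasiMeasurePreserving_fst.ae this
    filter_upwards [hne 0, hne 1] with p hp0 hp1
    by_cases hp : p.1 ∈ Icc (0:ℝ) 1
    · have hp0 : 0 < p.1 := lt_of_le_of_ne hp.1 (Ne.symm hp0)
      have hp1 : p.1 < 1 := lt_of_le_of_ne hp.2 hp1
      refine tendsto_const_nhds.congr' ?_
      have key : ∀ x : ℝ, ∀ᶠ T : ℝ in atTop, x + T * p.1 ∈ Icc (0:ℝ) T := by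
        intro x
        filter_upwards [eventually_ge_atTop (|x| / p.1), eventually_ge_atTop (|x| / (1 - p.1))] with T ha hb
        rw [div_le_iff₀ hp0] at ha
        rw [div_le_iff₀ (by linarith)] at hb
        constructor
        · linarith [neg_abs_le x]
        · linarith [le_abs_self x]
      filter_upwards [key p.2.1, key p.2.2.1, key p.2.2.2] with T hx hy hz
      rw [indicator_of_mem, indicator_of_mem]
      · exact ⟨⟨hp, trivial⟩, hx, hy, hz⟩
      · exact ⟨hp, trivial⟩
    · refine tendsto_const_nhds.congr fun T => ?_
      rw [indicator_of_notMem, indicator_of_notMem]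
      · exact fun h => hp h.1.1
      · exact fun h => hp h.1


theorem stmt_2 (H θ : ℝ) (h1 : 1/2 < H) (h2 : H < 3/4) (hθ : 0 < θ) :
    Tendsto (fun T : ℝ =>
      (∫ p in (Icc (0:ℝ) T) ×ˢ (Icc (0:ℝ) T) ×ˢ (Icc (0:ℝ) T) ×ˢ (Icc (0:ℝ) T),
        Real.exp (-θ * |p.2.1 - p.2.2.2| - θ * |p.1 - p.2.2.1|) *
          |p.2.1 - p.1| ^ (2*H - 2) * |p.2.2.2 - p.2.2.1| ^ (2*H - 2)) / T)
      atTop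
      (nhds (θ ^ (1 - 4*H) *
        ((8*H - 2) * Real.Gamma (2*H - 1) ^ 2 +
          (16*H - 4) * Real.Gamma (2*H - 1) * Real.Gamma (3 - 4*H) *
            Real.Gamma (4*H - 2) / Real.Gamma (2 - 2*H)))) := by
  set a := 2*H - 2 with ha
  have ha1 : -1 < a := by linarith
  have ha2 : a < -1/2 := by linarith
  have hlim := (ENNReal.tendsto_toReal ENNReal.ofReal_ne_top).comp (lim_lint hθ ha1 ha2)
  have hL : (ENNReal.ofReal (LL a θ)).toReal = θ ^ (1 - 4*H) *
        ((8*H - 2) * Real.Gamma (2*H - 1) ^ 2 +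
          (16*H - 4) * Real.Gamma (2*H - 1) * Real.Gamma (3 - 4*H) *
            Real.Gamma (4*H - 2) / Real.Gamma (2 - 2*H)) := by
    have hG : 0 < Real.Gamma (2*a+2) := Real.Gamma_pos_of_pos (by linarith)
    have h3 : 0 < 2*a+3 := by linarith
    have hG4 : 0 < Real.Gamma (4*H-2) := Real.Gamma_pos_of_pos (by linarith)
    have hG5 : 0 < Real.Gamma (2-2*H) := Real.Gamma_pos_of_pos (by linarith)
    rw [ENNReal.toReal_ofReal (by have := CC_nonneg ha1 ha2; unfold LL; positivity), LL, CC]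
    rw [show a + 1 + (a+1) = 4*H-2 by rw [ha]; ring, show 2*a+2 = 4*H-2 by rw [ha]; ring,
      show a + 1 = 2*H-1 by rw [ha]; ring, show -2*a-1 = 3-4*H by rw [ha]; ring,
      show -a = 2-2*H by rw [ha]; ring, show -(2*a+3) = 1-4*H by rw [ha]; ring,
      show 2*a+3 = 4*H-1 by rw [ha]; ring]
    generalize Real.Gamma (4*H-2) = A at *
    generalize Real.Gamma (2-2*H) = B at *
    have hA := hG4.ne'
    have hB := hG5.ne'
    field_simp
    ring
  rw [hL] at hlim
  refine hlim.congr' ?_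
  filter_upwards [eventually_gt_atTop 0] with T hT
  have hI := cube_eq a θ hT
  have : ∫ p in (Icc (0:ℝ) T) ×ˢ (Icc (0:ℝ) T) ×ˢ (Icc (0:ℝ) T) ×ˢ (Icc (0:ℝ) T), FF a θ p =
      (∫⁻ p in (Icc (0:ℝ) T) ×ˢ (Icc (0:ℝ) T) ×ˢ (Icc (0:ℝ) T) ×ˢ (Icc (0:ℝ) T),
      ENNReal.ofReal (FF a θ p)).toReal := by
    refine integral_eq_lintegral_of_nonneg_ae (Eventually.of_forall fun p => ?_)
      (FF_meas a θ).aestronglyMeasurable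
    unfold FF; simp only [Pi.zero_apply]; positivity
  rw [hI, ENNReal.toReal_mul, ENNReal.toReal_ofReal hT.le] at this
  unfold FF at this
  rw [this, mul_div_cancel_left₀ _ hT.ne']
  rfl
end

section
/- Let 1/2 < H < 3/4 and θ > 0. Then the function (x₁,x₂,x₃) ↦ e^{-θx₁ - θ|x₂-x₃|} x₃^{2H-2} |x₁-x₂|^{2H-2} is Lebesgue integrable on [0,∞)³, i.e. ∫_{[0,∞)³} e^{-θx₁ - θ|x₂-x₃|} x₃^{2H-2} |x₁-x₂|^{2H-2} dx₁ dx₂ dx₃ < ∞. -/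
open MeasureTheory Real Set

lemma aux_abs {f : ℝ → ℝ} (hf : IntegrableOn f (Ioi 0)) : Integrable (fun x : ℝ => f |x|) := by
  have := (integrable_fun_norm_addHaar (volume : Measure ℝ) (f := f)).2 (by simpa using hf)
  simpa using this

lemma aux_E {θ : ℝ} (hθ : 0 < θ) : Integrable (fun x : ℝ => Real.exp (-θ * |x|)) :=
  aux_abs (f := fun x => Real.exp (-θ * x)) (exp_neg_integrableOn_Ioi 0 hθ)

noncomputable def auxG (a t : ℝ) : ℝ := if |t| < 1 then |t| ^ a else |t| ^ (2 * a)

lemma auxG_int {a : ℝ} (h1 : -1 < a) (h2 : a < -1/2) : Integrable (auxG a) := by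
  refine aux_abs (f := fun t => if t < 1 then t ^ a else t ^ (2 * a)) ?_
  have : Ioi (0:ℝ) = Ioo 0 1 ∪ Ici 1 := by
    ext x; simp only [mem_Ioi, mem_union, mem_Ioo, mem_Ici]
    constructor
    · intro h
      rcases lt_or_ge x 1 with h' | h'
      · exact Or.inl ⟨h, h'⟩
      · exact Or.inr h'
    · rintro (h | h) <;> linarith [h]
  rw [this]
  refine IntegrableOn.union ?_ ?_
  · have h := (intervalIntegral.intervalIntegrable_rpow' (a := 0) (b := 1) h1)
    rw [intervalIntegrable_iff_integrableOn_Ioo_of_le zero_le_one] at h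
    refine h.congr_fun (fun x hx => ?_) measurableSet_Ioo
    simp [hx.2]
  · rw [integrableOn_Ici_iff_integrableOn_Ioi]
    refine (integrableOn_Ioi_rpow_of_lt (a := 2 * a) (c := 1) (by linarith) one_pos).congr_fun
      (fun x hx => ?_) measurableSet_Ioi
    simp [not_lt.2 (le_of_lt (show (1:ℝ) < x from hx))]

lemma auxG_nonneg (a t : ℝ) : 0 ≤ auxG a t := by
  unfold auxG; split_ifs <;> positivity

lemma aux_bound {a : ℝ} (ha : a < 0) (u v E : ℝ) (hE : 0 ≤ E) (hE1 : E ≤ 1) :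
    E * |u| ^ a * |v| ^ a ≤ E * auxG a u + E * auxG a v + auxG a v * auxG a u := by
  have key : ∀ t : ℝ, 1 ≤ |t| → |t| ^ a ≤ 1 := fun t ht =>
    Real.rpow_le_one_of_one_le_of_nonpos ht ha.le
  have sqq : ∀ t : ℝ, |t| ^ (2 * a) = (|t| ^ a) ^ 2 := fun t => by
    rw [mul_comm, Real.rpow_mul (abs_nonneg t)]; norm_cast
  have hu : 0 ≤ |u| ^ a := by positivity
  have hv : 0 ≤ |v| ^ a := by positivity
  have huv := mul_nonneg hu hv
  unfold auxG
  split_ifs with h1 h2 h2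
  · nlinarith [mul_nonneg (sub_nonneg.2 hE1) huv, mul_nonneg hE hu, mul_nonneg hE hv]
  · have := key v (not_lt.1 h2)
    rw [sqq]
    have h3 := mul_le_mul_of_nonneg_left this (mul_nonneg hE hu)
    have : 0 ≤ E * (|v| ^ a) ^ 2 := by positivity
    have : 0 ≤ (|v| ^ a) ^ 2 * |u| ^ a := by positivity
    linarith
  · have := key u (not_lt.1 h1)
    rw [sqq]
    have h3 := mul_le_mul_of_nonneg_left this (mul_nonneg hE hv)
    have : 0 ≤ E * (|u| ^ a) ^ 2 := by positivity
    have : 0 ≤ |v| ^ a * (|u| ^ a) ^ 2 := by positivity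
    linarith
  · rw [sqq, sqq]
    have : 0 ≤ (|v| ^ a) ^ 2 * (|u| ^ a) ^ 2 := by positivity
    have := mul_nonneg hE (sq_nonneg (|u| ^ a - |v| ^ a))
    have := mul_nonneg hE huv
    nlinarith

lemma aux_mp1 : MeasurePreserving (fun p : ℝ × ℝ × ℝ => (p.1, p.2.1 - p.2.2, p.2.2)) :=
  MeasurePreserving.prod (MeasurePreserving.id volume)
    (measurePreserving_sub_prod (volume : Measure ℝ) (volume : Measure ℝ))

lemma aux_mp2 : MeasurePreserving (fun p : ℝ × ℝ × ℝ => (p.1, p.1 - p.2.1, p.2.2)) := by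
  refine MeasurePreserving.skew_product (MeasurePreserving.id volume)
    (g := fun x (q : ℝ × ℝ) => (x - q.1, q.2)) (by unfold Function.uncurry; fun_prop) ?_
  refine Filter.Eventually.of_forall fun x => ?_
  exact (MeasurePreserving.prod (volume.measurePreserving_sub_left x)
    (MeasurePreserving.id volume)).map_eq

lemma aux_mp3 : MeasurePreserving (fun p : ℝ × ℝ × ℝ => (p.1, p.1 - p.2.1, p.2.1 - p.2.2)) := by
  refine MeasurePreserving.skew_product (MeasurePreserving.id volume)
    (g := fun x (q : ℝ × ℝ) => (x - q.1, q.1 - q.2)) (by unfold Function.uncurry; fun_prop) ?_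
  refine Filter.Eventually.of_forall fun x => ?_
  refine (MeasurePreserving.skew_product (volume.measurePreserving_sub_left x)
    (g := fun y z : ℝ => y - z) (by unfold Function.uncurry; fun_prop) ?_).map_eq
  exact Filter.Eventually.of_forall fun y => (volume.measurePreserving_sub_left y).map_eq

theorem stmt_3 (H θ : ℝ) (h1 : 1/2 < H) (h2 : H < 3/4) (hθ : 0 < θ) :
    IntegrableOn (fun p : ℝ × ℝ × ℝ =>
      Real.exp (-θ * p.1 - θ * |p.2.1 - p.2.2|) *
        p.2.2 ^ (2*H - 2) * |p.1 - p.2.1| ^ (2*H - 2))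
      ((Ici (0:ℝ)) ×ˢ (Ici (0:ℝ)) ×ˢ (Ici (0:ℝ))) := by
  have hE := aux_E hθ
  have hG := auxG_int (a := 2*H-2) (by linarith) (by linarith)
  have i1 := aux_mp1.integrable_comp_of_integrable (hE.mul_prod (hE.mul_prod hG))
  have i2 := aux_mp2.integrable_comp_of_integrable (hE.mul_prod (hG.mul_prod hG))
  have i3 := aux_mp3.integrable_comp_of_integrable (hE.mul_prod (hG.mul_prod hE))
  refine Integrable.mono' ((i1.add i3).add i2).integrableOn
    (Measurable.aestronglyMeasurable (by fun_prop)) ?_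
  refine (ae_restrict_iff' (by measurability)).2 (Filter.Eventually.of_forall fun p hp => ?_)
  obtain ⟨x, y, z⟩ := p
  simp only [mem_prod, mem_Ici] at hp
  obtain ⟨hx, hy, hz⟩ := hp
  have hb := aux_bound (a := 2*H-2) (by linarith) z (x - y) (Real.exp (-θ * |y - z|))
    (Real.exp_nonneg _) (Real.exp_le_one_iff.2 (by nlinarith [abs_nonneg (y - z)]))
  have hb' := mul_le_mul_of_nonneg_left hb (Real.exp_nonneg (-θ * x))
  rw [Real.norm_of_nonneg (by positivity)]
  simp only [Pi.add_apply, Function.comp, abs_of_nonneg hx]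
  rw [abs_of_nonneg hz] at hb'
  have : Real.exp (-θ * x - θ * |y - z|) = Real.exp (-θ * x) * Real.exp (-θ * |y - z|) := by
    rw [← Real.exp_add]; ring_nf
  rw [this]
  linarith
end

section
/- Let 1/2 < H < 3/4. Then ∫₀^∞ ∫₀^∞ (1+x) e^{-x} (w+x)^{2H-2} w^{2H-2} dw dx = (4H-1) Γ(2H-1) Γ(3-4H) Γ(4H-2) / Γ(2-2H). -/
open MeasureTheory Real Set

lemma K_eq (H : ℝ) (h1 : 1/2 < H) (h2 : H < 3/4) :
    ∫ w in Ioi (0:ℝ), (w + 1) ^ (2*H - 2) * w ^ (2*H - 2)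
      = Real.Gamma (2*H - 1) * Real.Gamma (3 - 4*H) / Real.Gamma (2 - 2*H) := by
  have him : (fun u : ℝ => u / (1 - u)) '' Ioo 0 1 = Ioi 0 := by
    ext t
    simp only [mem_image, mem_Ioo, mem_Ioi]
    constructor
    · rintro ⟨u, ⟨h0, h1⟩, rfl⟩
      exact div_pos h0 (by linarith)
    · intro ht
      refine ⟨t / (1 + t), ⟨by positivity, ?_⟩, ?_⟩
      · rw [div_lt_one (by positivity)]; linarith
      · have : (1 + t) ≠ 0 := by positivity
        field_simp
        simp
  have hd : ∀ u ∈ Ioo (0:ℝ) 1, HasDerivWithinAt (fun u : ℝ => u / (1 - u))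
      (((1 - u)^2)⁻¹) (Ioo 0 1) u := by
    intro u hu
    have h : (1 - u) ≠ 0 := by linarith [hu.2]
    have := ((hasDerivAt_id u).div ((hasDerivAt_const u (1:ℝ)).sub (hasDerivAt_id u)) h)
    refine (this.congr_deriv ?_).hasDerivWithinAt
    simp
  have hinj : InjOn (fun u : ℝ => u / (1 - u)) (Ioo 0 1) := by
    intro a ha b hb hab
    have h : (1 - a) ≠ 0 := by linarith [ha.2]
    have h' : (1 - b) ≠ 0 := by linarith [hb.2]
    simp only at hab
    rw [div_eq_div_iff h h'] at hab
    linarith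
  rw [← him, integral_image_eq_integral_abs_deriv_smul measurableSet_Ioo hd hinj]
  have hb := ProbabilityTheory.beta_eq_betaIntegralReal (2*H-1) (3-4*H) (by linarith) (by linarith)
  rw [ProbabilityTheory.beta, show 2*H-1+(3-4*H) = 2-2*H by ring] at hb
  rw [hb, Complex.betaIntegral, intervalIntegral.integral_of_le zero_le_one,
    integral_Ioc_eq_integral_Ioo]
  have : ∀ u ∈ Ioo (0:ℝ) 1, (u:ℂ) ^ (((2*H-1 : ℝ):ℂ) - 1) * (1 - (u:ℂ)) ^ (((3-4*H : ℝ):ℂ) - 1)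
      = (((|((1 - u)^2)⁻¹| • ((u / (1 - u) + 1) ^ (2*H - 2) * (u / (1 - u)) ^ (2*H - 2)) : ℝ)) : ℂ) := by
    intro u hu
    have h : 0 < 1 - u := by linarith [hu.2]
    have e : |((1 - u)^2)⁻¹| • ((u / (1 - u) + 1) ^ (2*H - 2) * (u / (1 - u)) ^ (2*H - 2))
        = u ^ (2*H-1-1) * (1-u) ^ (3-4*H-1) := by
      have e1 : u / (1 - u) + 1 = (1-u)⁻¹ := by field_simp; ring
      rw [e1, abs_of_pos (by positivity), smul_eq_mul, Real.div_rpow hu.1.le h.le,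
        Real.inv_rpow h.le, ← Real.rpow_natCast, div_eq_mul_inv, ← Real.rpow_neg h.le,
        ← Real.rpow_neg h.le, show 3-4*H-1 = -((2:ℕ):ℝ) + (-(2*H-2)) + (-(2*H-2)) by push_cast; ring,
        Real.rpow_add h, Real.rpow_add h, show 2*H-1-1 = 2*H-2 by ring]
      ring
    rw [e, Complex.ofReal_mul, Complex.ofReal_cpow hu.1.le, Complex.ofReal_cpow h.le]
    push_cast
    rfl
  rw [setIntegral_congr_fun measurableSet_Ioo this, integral_complex_ofReal, Complex.ofReal_re]

lemma inner_eq (H : ℝ) (h1 : 1/2 < H) (h2 : H < 3/4) (x : ℝ) (hx : 0 < x) :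
    ∫ w in Ioi (0:ℝ), (w + x) ^ (2*H - 2) * w ^ (2*H - 2)
      = x ^ (4*H-3) * (Real.Gamma (2*H - 1) * Real.Gamma (3 - 4*H) / Real.Gamma (2 - 2*H)) := by
  have h := integral_comp_mul_left_Ioi
    (fun w : ℝ => (w + x) ^ (2*H - 2) * w ^ (2*H - 2)) 0 hx
  rw [mul_zero, smul_eq_mul] at h
  have e : ∀ w ∈ Ioi (0:ℝ), (x * w + x) ^ (2*H - 2) * (x * w) ^ (2*H - 2)
      = x ^ (4*H-4) * ((w + 1) ^ (2*H - 2) * w ^ (2*H - 2)) := by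
    intro w hw
    have hw' : 0 < w := hw
    rw [show x * w + x = x * (w+1) by ring, Real.mul_rpow hx.le (by positivity),
      Real.mul_rpow hx.le hw'.le, show 4*H-4 = (2*H-2)+(2*H-2) by ring, Real.rpow_add hx]
    ring
  rw [setIntegral_congr_fun measurableSet_Ioi e, integral_const_mul, K_eq H h1 h2] at h
  rw [show 4*H-3 = 1 + (4*H-4) by ring, Real.rpow_add hx, Real.rpow_one, mul_assoc, h]
  field_simp

theorem stmt_6 (H : ℝ) (h1 : 1/2 < H) (h2 : H < 3/4) :
    (∫ x in Ioi (0:ℝ), ∫ w in Ioi (0:ℝ),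
      (1 + x) * Real.exp (-x) * (w + x) ^ (2*H - 2) * w ^ (2*H - 2))
      = (4*H - 1) * Real.Gamma (2*H - 1) * Real.Gamma (3 - 4*H) *
          Real.Gamma (4*H - 2) / Real.Gamma (2 - 2*H) := by
  have e : ∀ x ∈ Ioi (0:ℝ), (∫ w in Ioi (0:ℝ),
      (1 + x) * Real.exp (-x) * (w + x) ^ (2*H - 2) * w ^ (2*H - 2))
      = (Real.exp (-x) * x ^ (4*H-2-1) + Real.exp (-x) * x ^ (4*H-1-1)) *
        (Real.Gamma (2*H - 1) * Real.Gamma (3 - 4*H) / Real.Gamma (2 - 2*H)) := by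
    intro x hx
    have hx' : 0 < x := hx
    simp_rw [mul_assoc ((1 + x) * Real.exp (-x))]
    rw [integral_const_mul, inner_eq H h1 h2 x hx, show 4*H-1-1 = (4*H-3) + 1 by ring,
      Real.rpow_add hx', Real.rpow_one, show 4*H-2-1 = 4*H-3 by ring]
    ring
  rw [setIntegral_congr_fun measurableSet_Ioi e, integral_mul_const,
    integral_add (Real.GammaIntegral_convergent (by linarith))
      (Real.GammaIntegral_convergent (by linarith)),
    ← Real.Gamma_eq_integral (by linarith), ← Real.Gamma_eq_integral (by linarith),
    show 4*H-1 = (4*H-2)+1 by ring, Real.Gamma_add_one (by linarith)]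
  ring
end

section
/- Let 1/2 < H < 1 and θ > 0. There exists a constant C = C_{θ,H} > 0 such that for all real numbers s, t, T with 0 ≤ s < t ≤ T, one has H(2H-1) ∫_t^T ∫_s^T e^{-θ(ξ-s)} e^{-θ(η-t)} |ξ-η|^{2H-2} dξ dη ≤ C (t-s)^{2H-2}. -/
open MeasureTheory Real Set

lemma aux_pow_int (a : ℝ) (ha1 : a < 1) :
    Integrable (indicator (Icc (-1:ℝ) 1) (fun u => |u| ^ (-a))) := by
  rw [integrable_indicator_iff measurableSet_Icc]
  have hp : IntervalIntegrable (fun u : ℝ => |u| ^ (-a)) volume 0 1 := by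
    refine (intervalIntegral.intervalIntegrable_rpow' (by linarith : -1 < -a)).congr ?_
    intro u hu
    rw [uIoc_of_le zero_le_one] at hu
    simp only [abs_of_pos hu.1]
  have hn : IntervalIntegrable (fun u : ℝ => |u| ^ (-a)) volume (-1) 0 := by
    have := (IntervalIntegrable.iff_comp_neg (f := fun u : ℝ => |u| ^ (-a)) (a := 0) (b := 1)).1 hp
    simp only [abs_neg, neg_zero] at this
    exact this.symm
  have := hn.trans hp
  rw [intervalIntegrable_iff_integrableOn_Icc_of_le (by norm_num)] at this
  exact this

lemma aux_exp_int (c : ℝ) (hc : 0 < c) :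
    Integrable (indicator (Ioi (0:ℝ)) (fun u => Real.exp (-c * u))) := by
  rw [integrable_indicator_iff measurableSet_Ioi]
  exact exp_neg_integrableOn_Ioi 0 hc

lemma aux_pt (a θ x r : ℝ) (ha : 0 < a) (ha1 : a < 1) (hθ : 0 < θ) (hx : 0 < x) (hr : 0 < r) :
    Real.exp (-θ * x) * |x - r| ^ (-a) ≤
      r ^ (-a) * (Real.exp (-θ * x) + (1 + 2/θ) * Real.exp (-(θ/2) * x)
        + (1 + 2/θ) * indicator (Icc (-1:ℝ) 1) (fun u => |u| ^ (-a)) (x - r)) := by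
  have hM : 0 < 1 + 2/θ := by positivity
  have hind : 0 ≤ indicator (Icc (-1:ℝ) 1) (fun u => |u| ^ (-a)) (x - r) :=
    indicator_nonneg (fun u _ => by positivity) _
  rcases eq_or_ne x r with h | h
  · have : |x - r| ^ (-a) = 0 := by
      rw [h, sub_self, abs_zero, Real.zero_rpow (by linarith)]
    rw [this, mul_zero]
    positivity
  have hu : 0 < |x - r| := abs_pos.2 (sub_ne_zero.2 h)
  -- subadditivity
  have hsub : r ^ a ≤ |x - r| ^ a + x ^ a := by
    calc r ^ a ≤ (|x - r| + x) ^ a := by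
          apply Real.rpow_le_rpow hr.le _ ha.le
          have := neg_abs_le (x - r)
          linarith
      _ ≤ _ := Real.rpow_add_le_add_rpow hu.le hx.le ha.le ha1.le
  have hinv : |x - r| ^ (-a) * |x - r| ^ a = 1 := by
    rw [← Real.rpow_add hu]; simp
  have hrinv : r ^ (-a) * r ^ a = 1 := by
    rw [← Real.rpow_add hr]; simp
  have hle : |x - r| ^ (-a) ≤ 1 + indicator (Icc (-1:ℝ) 1) (fun u => |u| ^ (-a)) (x - r) := by
    by_cases hm : x - r ∈ Icc (-1:ℝ) 1
    · rw [indicator_of_mem hm]; linarith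
    · rw [indicator_of_notMem hm, add_zero]
      apply Real.rpow_le_one_of_one_le_of_nonpos _ (by linarith)
      by_contra! hc
      exact hm (abs_le.1 hc.le)
  have hxa : x ^ a ≤ (1 + 2/θ) * Real.exp (θ/2 * x) := by
    have h1 : x ^ a ≤ 1 + x := by
      rcases le_total x 1 with h | h
      · have := Real.rpow_le_one hx.le h ha.le; linarith
      · have := Real.rpow_le_rpow_of_exponent_le h ha1.le
        rw [Real.rpow_one] at this; linarith
    have h2 := Real.add_one_le_exp (θ/2 * x)
    have h3 : x = 2/θ * (θ/2*x) := by field_simp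
    have h4 : 0 < θ/2*x := by positivity
    have h5 : 2/θ * (θ/2*x) ≤ 2/θ * Real.exp (θ/2 * x) := by
      apply mul_le_mul_of_nonneg_left _ (by positivity); linarith
    linarith
  have hexp : Real.exp (-θ * x) * x ^ a ≤ (1 + 2/θ) * Real.exp (-(θ/2) * x) := by
    calc _ ≤ Real.exp (-θ * x) * ((1 + 2/θ) * Real.exp (θ/2 * x)) := by gcongr
      _ = (1 + 2/θ) * (Real.exp (-θ * x) * Real.exp (θ/2 * x)) := by ring
      _ = _ := by rw [← Real.exp_add]; congr 2; ring
  have he1 : Real.exp (-(θ/2) * x) ≤ 1 := by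
    apply Real.exp_le_one_iff.2
    have : 0 < θ/2*x := by positivity
    linarith
  set I := indicator (Icc (-1:ℝ) 1) (fun u => |u| ^ (-a)) (x - r)
  set P := |x - r| ^ (-a)
  have hP : 0 ≤ P := by positivity
  calc Real.exp (-θ * x) * P = r ^ (-a) * (Real.exp (-θ * x) * P * r ^ a) := by
        rw [show r ^ (-a) * (Real.exp (-θ * x) * P * r ^ a)
          = (r ^ (-a) * r ^ a) * (Real.exp (-θ * x) * P) by ring, hrinv, one_mul]
    _ ≤ r ^ (-a) * (Real.exp (-θ * x) * P * (|x - r| ^ a + x ^ a)) := by gcongr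
    _ = r ^ (-a) * (Real.exp (-θ * x) * (P * |x - r| ^ a) + (Real.exp (-θ * x) * x ^ a) * P) := by
        ring
    _ ≤ r ^ (-a) * (Real.exp (-θ * x) * 1
          + ((1 + 2/θ) * Real.exp (-(θ/2) * x)) * (1 + I)) := by
        rw [hinv]; gcongr
    _ ≤ _ := by
        apply mul_le_mul_of_nonneg_left _ (by positivity)
        have := mul_le_mul_of_nonneg_right he1 (mul_nonneg hM.le hind)
        linarith

lemma aux_inner (a θ : ℝ) (ha : 0 < a) (ha1 : a < 1) (hθ : 0 < θ) :
    ∃ K : ℝ, 0 ≤ K ∧ ∀ s η T : ℝ, s < η → s ≤ T →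
      ∫ ξ in s..T, Real.exp (-θ * (ξ - s)) * |ξ - η| ^ (-a) ≤ K * (η - s) ^ (-a) := by
  set g := indicator (Icc (-1:ℝ) 1) (fun u => |u| ^ (-a)) with hg
  set e1 := indicator (Ioi (0:ℝ)) (fun u => Real.exp (-θ * u)) with he1
  set e2 := indicator (Ioi (0:ℝ)) (fun u => Real.exp (-(θ/2) * u)) with he2
  have ig : Integrable g := aux_pow_int a ha1
  have i1 : Integrable e1 := aux_exp_int θ hθ
  have i2 : Integrable e2 := aux_exp_int (θ/2) (by positivity)
  have ng : ∀ x, 0 ≤ g x := fun x => indicator_nonneg (fun u _ => by positivity) _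
  have n1 : ∀ x, 0 ≤ e1 x := fun x => indicator_nonneg (fun u _ => by positivity) _
  have n2 : ∀ x, 0 ≤ e2 x := fun x => indicator_nonneg (fun u _ => by positivity) _
  have pg := integral_nonneg (μ := volume) (f := g) ng
  have p1 := integral_nonneg (μ := volume) (f := e1) n1
  have p2 := integral_nonneg (μ := volume) (f := e2) n2
  refine ⟨(∫ x, e1 x) + (1 + 2/θ) * (∫ x, e2 x) + (1 + 2/θ) * ∫ x, g x, by positivity, ?_⟩
  intro s η T hs hT
  have hr : 0 < η - s := by linarith
  rw [intervalIntegral.integral_of_le hT]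
  have j1 := i1.comp_sub_right s
  have j2 := (i2.comp_sub_right s).const_mul (1 + 2/θ)
  have jg := (ig.comp_sub_right η).const_mul (1 + 2/θ)
  have j12 : Integrable (fun ξ => e1 (ξ - s) + (1 + 2/θ) * e2 (ξ - s)) := j1.add j2
  have jj : Integrable (fun ξ => (η - s) ^ (-a) *
      (e1 (ξ - s) + (1 + 2/θ) * e2 (ξ - s) + (1 + 2/θ) * g (ξ - η))) :=
    (j12.add jg).const_mul ((η - s) ^ (-a))
  calc _ ≤ ∫ ξ in Ioc s T, (η - s) ^ (-a) *
          (e1 (ξ - s) + (1 + 2/θ) * e2 (ξ - s) + (1 + 2/θ) * g (ξ - η)) := by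
        apply integral_mono_of_nonneg
        · exact Filter.Eventually.of_forall (fun x => by simp only [Pi.zero_apply]; positivity)
        · exact jj.integrableOn
        · refine (ae_restrict_iff' measurableSet_Ioc).2 (Filter.Eventually.of_forall ?_)
          intro ξ hξ
          have hx : 0 < ξ - s := by linarith [hξ.1]
          have := aux_pt a θ (ξ - s) (η - s) ha ha1 hθ hx hr
          rw [sub_sub_sub_cancel_right] at this
          simp only [he1, he2, hg, indicator_of_mem (show ξ - s ∈ Ioi (0:ℝ) from hx)]
          exact this
    _ ≤ ∫ ξ, (η - s) ^ (-a) *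
          (e1 (ξ - s) + (1 + 2/θ) * e2 (ξ - s) + (1 + 2/θ) * g (ξ - η)) := by
        apply setIntegral_le_integral jj
        refine Filter.Eventually.of_forall (fun x => ?_)
        have := ng (x - η)
        have := n1 (x - s)
        have := n2 (x - s)
        simp only [Pi.zero_apply]
        positivity
    _ = _ := by
        rw [integral_const_mul, mul_comm]
        congr 1
        rw [integral_add j12 jg, integral_add j1 j2, integral_const_mul,
          integral_const_mul, integral_sub_right_eq_self e1, integral_sub_right_eq_self e2,
          integral_sub_right_eq_self g]

theorem stmt_7 (H θ : ℝ) (h1 : 1/2 < H) (h2 : H < 1) (hθ : 0 < θ) :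
    ∃ C : ℝ, 0 < C ∧ ∀ s t T : ℝ, 0 ≤ s → s < t → t ≤ T →
      H * (2*H - 1) * ∫ η in t..T, ∫ ξ in s..T,
        Real.exp (-θ * (ξ - s)) * Real.exp (-θ * (η - t)) * |ξ - η| ^ (2*H - 2)
        ≤ C * (t - s) ^ (2*H - 2) := by
  obtain ⟨K, hK, hin⟩ := aux_inner (2 - 2*H) θ (by linarith) (by linarith) hθ
  rw [show -(2 - 2*H) = 2*H - 2 by ring] at hin
  set e1 := indicator (Ioi (0:ℝ)) (fun u => Real.exp (-θ * u)) with he1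
  have i1 : Integrable e1 := aux_exp_int θ hθ
  have n1 : ∀ x, 0 ≤ e1 x := fun x => indicator_nonneg (fun u _ => by positivity) _
  have p1 := integral_nonneg (μ := volume) (f := e1) n1
  have hH : 0 < H * (2*H - 1) := mul_pos (by linarith) (by linarith)
  refine ⟨H * (2*H - 1) * (K * ∫ x, e1 x) + 1, by positivity, ?_⟩
  intro s t T _ hst htT
  have hd : 0 < t - s := by linarith
  have jj := (i1.comp_sub_right t).const_mul (K * (t - s) ^ (2*H - 2))
  have main : ∫ η in t..T, ∫ ξ in s..T,
        Real.exp (-θ * (ξ - s)) * Real.exp (-θ * (η - t)) * |ξ - η| ^ (2*H - 2)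
        ≤ K * (t - s) ^ (2*H - 2) * ∫ x, e1 x := by
    rw [intervalIntegral.integral_of_le htT]
    calc _ ≤ ∫ η in Ioc t T, K * (t - s) ^ (2*H - 2) * e1 (η - t) := by
          apply integral_mono_of_nonneg
          · refine Filter.Eventually.of_forall (fun η => ?_)
            exact intervalIntegral.integral_nonneg (by linarith) (fun ξ _ => by positivity)
          · exact jj.integrableOn
          · refine (ae_restrict_iff' measurableSet_Ioc).2 (Filter.Eventually.of_forall ?_)
            intro η hη
            have hx : 0 < η - t := by linarith [hη.1]
            simp only [he1, indicator_of_mem (show η - t ∈ Ioi (0:ℝ) from hx)]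
            calc _ = Real.exp (-θ * (η - t)) *
                  ∫ ξ in s..T, Real.exp (-θ * (ξ - s)) * |ξ - η| ^ (2*H - 2) := by
                  rw [← intervalIntegral.integral_const_mul]
                  congr 1; ext ξ; ring
              _ ≤ Real.exp (-θ * (η - t)) * (K * (η - s) ^ (2*H - 2)) := by
                  gcongr
                  exact hin s η T (by linarith) (by linarith)
              _ ≤ Real.exp (-θ * (η - t)) * (K * (t - s) ^ (2*H - 2)) := by
                  have := Real.rpow_le_rpow_of_nonpos hd
                    (by linarith : t - s ≤ η - s) (by linarith : 2*H - 2 ≤ 0)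
                  gcongr
              _ = _ := by ring
      _ ≤ ∫ η, K * (t - s) ^ (2*H - 2) * e1 (η - t) := by
          apply setIntegral_le_integral jj
          refine Filter.Eventually.of_forall (fun x => ?_)
          have := n1 (x - t)
          simp only [Pi.zero_apply]
          positivity
      _ = _ := by
          rw [integral_const_mul, integral_sub_right_eq_self e1]
  have hpos : 0 < (t - s) ^ (2*H - 2) := by positivity
  have := mul_le_mul_of_nonneg_left main hH.le
  linarith
end

section
/- Let 1/2 < H < 1 and θ > 0. There exists a constant C = C_{θ,H} > 0 such that for all real numbers s, t with 0 ≤ s < t, one has H(2H-1) ∫₀^t ∫₀^s e^{-θ(t-u)} e^{-θ(s-v)} |u-v|^{2H-2} dv du ≤ C (t-s)^{2H-2}. -/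
open MeasureTheory Real Set

lemma aux_K (a θ : ℝ) (ha0 : 0 < a) (ha1 : a < 1) (hθ : 0 < θ) (x : ℝ) (hx : 0 ≤ x) :
    x ^ a * Real.exp (-(θ/2) * x) ≤ 1 + 2/θ := by
  have h1 : x ^ a ≤ 1 + x := by
    rcases le_total x 1 with h | h
    · have := Real.rpow_le_one hx h ha0.le
      linarith
    · have := Real.rpow_le_rpow_of_exponent_le h ha1.le
      rw [Real.rpow_one] at this
      linarith
  have h2 : θ/2 * x + 1 ≤ Real.exp (θ/2 * x) := Real.add_one_le_exp _
  have h3 : x ^ a ≤ (1 + 2/θ) * Real.exp (θ/2 * x) := by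
    calc x ^ a ≤ 1 + x := h1
      _ ≤ (1 + 2/θ) * (θ/2 * x + 1) := by
        have : (1 + 2/θ) * (θ/2 * x + 1) = 1 + x + (θ/2*x + 2/θ) := by
          field_simp
          ring
        rw [this]
        have : 0 ≤ θ/2*x + 2/θ := by positivity
        linarith
      _ ≤ _ := by gcongr
  calc x ^ a * Real.exp (-(θ/2) * x) ≤ ((1 + 2/θ) * Real.exp (θ/2 * x)) * Real.exp (-(θ/2) * x) := by
        gcongr
    _ = 1 + 2/θ := by
        rw [mul_assoc, ← Real.exp_add]
        simp

noncomputable def auxE (θ : ℝ) : ℝ → ℝ := (Ici (0:ℝ)).indicator (fun x => Real.exp (-(θ/2) * x))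

noncomputable def auxh (a : ℝ) : ℝ → ℝ := (Ioc (0:ℝ) 1).indicator (fun x => x ^ (-a))

lemma auxE_nonneg (θ x : ℝ) : 0 ≤ auxE θ x :=
  indicator_nonneg (fun _ _ => (Real.exp_pos _).le) _

lemma auxh_nonneg (a x : ℝ) : 0 ≤ auxh a x :=
  indicator_nonneg (fun _ hx => Real.rpow_nonneg hx.1.le _) _

lemma auxE_int (θ : ℝ) (hθ : 0 < θ) : Integrable (auxE θ) := by
  unfold auxE
  rw [integrable_indicator_iff measurableSet_Ici, integrableOn_Ici_iff_integrableOn_Ioi]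
  exact exp_neg_integrableOn_Ioi 0 (by positivity)

lemma auxh_int (a : ℝ) (ha1 : a < 1) : Integrable (auxh a) := by
  unfold auxh
  rw [integrable_indicator_iff measurableSet_Ioc,
    ← intervalIntegrable_iff_integrableOn_Ioc_of_le zero_le_one]
  exact intervalIntegral.intervalIntegrable_rpow' (by linarith)

lemma auxh_bound (a : ℝ) (ha0 : 0 < a) (w : ℝ) :
    |w| ^ (-a) ≤ 1 + auxh a w + auxh a (-w) := by
  have p1 := auxh_nonneg a w
  have p2 := auxh_nonneg a (-w)
  rcases le_or_gt 1 |w| with h | h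
  · have := Real.rpow_le_one_of_one_le_of_nonpos h (by linarith : -a ≤ 0)
    linarith
  · rcases lt_trichotomy w 0 with hw | hw | hw
    · rw [abs_of_neg hw] at h ⊢
      have : auxh a (-w) = (-w) ^ (-a) := indicator_of_mem (by constructor <;> linarith) _
      linarith
    · subst hw
      rw [abs_zero, Real.zero_rpow (by linarith)]
      linarith
    · rw [abs_of_pos hw] at h ⊢
      have : auxh a w = w ^ (-a) := indicator_of_mem (by constructor <;> linarith) _
      linarith

lemma aux_sub (a : ℝ) (ha0 : 0 < a) (ha1 : a < 1) (d w x y : ℝ) (hd : 0 < d) (hx : 0 ≤ x)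
    (hy : 0 ≤ y) (h : d ≤ |w| + x + y) :
    d ^ a * |w| ^ (-a) ≤ 1 + (x ^ a + y ^ a) * |w| ^ (-a) := by
  have hxa : 0 ≤ x ^ a := Real.rpow_nonneg hx _
  have hya : 0 ≤ y ^ a := Real.rpow_nonneg hy _
  rcases (abs_nonneg w).eq_or_lt with h0 | h0
  · rw [← h0, Real.zero_rpow (by linarith)]
    simp
  · have e1 : d ^ a ≤ |w| ^ a + x ^ a + y ^ a := by
      calc d ^ a ≤ (|w| + x + y) ^ a := Real.rpow_le_rpow hd.le h ha0.le
        _ ≤ (|w| + x) ^ a + y ^ a := Real.rpow_add_le_add_rpow (by positivity) hy ha0.le ha1.le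
        _ ≤ _ := by
          gcongr
          exact Real.rpow_add_le_add_rpow (by positivity) hx ha0.le ha1.le
    have e2 : |w| ^ a * |w| ^ (-a) = 1 := by
      rw [← Real.rpow_add h0]
      simp
    calc d ^ a * |w| ^ (-a) ≤ (|w| ^ a + x ^ a + y ^ a) * |w| ^ (-a) := by gcongr
      _ = _ := by linear_combination e2

lemma aux_point (a θ : ℝ) (ha0 : 0 < a) (ha1 : a < 1) (hθ : 0 < θ) (s t u v : ℝ) (hst : s < t)
    (hu : u ≤ t) (hv : v ≤ s) :
    (t - s) ^ a * (Real.exp (-θ * (t - u)) * Real.exp (-θ * (s - v)) * |u - v| ^ (-a)) ≤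
      auxE θ (t - u) * ((1 + 2 * (1 + 2/θ)) * auxE θ (s - v)
        + 2 * (1 + 2/θ) * (auxh a (u - v) + auxh a (v - u))) := by
  set K := 1 + 2/θ with hK
  have hK0 : 0 < K := by positivity
  have hx : 0 ≤ t - u := by linarith
  have hy : 0 ≤ s - v := by linarith
  have hb := auxh_bound a ha0 (u - v)
  rw [neg_sub] at hb
  have q1 := auxh_nonneg a (u - v)
  have q2 := auxh_nonneg a (v - u)
  have hE1 : auxE θ (t - u) = Real.exp (-(θ/2) * (t-u)) := indicator_of_mem (by exact hx) _
  have hE2 : auxE θ (s - v) = Real.exp (-(θ/2) * (s-v)) := indicator_of_mem (by exact hy) _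
  have hs := aux_sub a ha0 ha1 (t - s) (u - v) (t - u) (s - v) (by linarith) hx hy
    (by have := le_abs_self (u - v); linarith)
  have k1 := aux_K a θ ha0 ha1 hθ (t - u) hx
  have k2 := aux_K a θ ha0 ha1 hθ (s - v) hy
  have x1 : Real.exp (-θ * (t - u)) = Real.exp (-(θ/2) * (t-u)) * Real.exp (-(θ/2) * (t-u)) := by
    rw [← Real.exp_add]; congr 1; ring
  have x2 : Real.exp (-θ * (s - v)) = Real.exp (-(θ/2) * (s-v)) * Real.exp (-(θ/2) * (s-v)) := by
    rw [← Real.exp_add]; congr 1; ring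
  have l1 : Real.exp (-(θ/2) * (t-u)) ≤ 1 := Real.exp_le_one_iff.2 (by nlinarith)
  have l2 : Real.exp (-(θ/2) * (s-v)) ≤ 1 := Real.exp_le_one_iff.2 (by nlinarith)
  have hw : 0 ≤ |u - v| ^ (-a) := by positivity
  rw [hE1, hE2, x1, x2]
  have p1 := Real.exp_pos (-(θ/2) * (t-u))
  have p2 := Real.exp_pos (-(θ/2) * (s-v))
  rw [← hK] at k1 k2
  generalize Real.exp (-(θ/2) * (t-u)) = X at *
  generalize Real.exp (-(θ/2) * (s-v)) = Y at *
  generalize |u - v| ^ (-a) = w at *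
  generalize (t - u) ^ a = A at *
  generalize (s - v) ^ a = B at *
  generalize (t - s) ^ a = D at *
  generalize auxh a (u - v) = m at *
  generalize auxh a (v - u) = n at *
  have XY : X * Y * (X * Y) ≤ X * Y := by
    have : X * Y ≤ 1 := mul_le_one₀ l1 p2.le l2
    nlinarith [mul_pos p1 p2]
  calc D * (X * X * (Y * Y) * w) = (X * X * (Y * Y)) * (D * w) := by ring
    _ ≤ (X * X * (Y * Y)) * (1 + (A + B) * w) := by gcongr
    _ = X * Y * (X * Y) + (A * X) * (X * Y * w) * Y + (B * Y) * (X * Y * w) * X := by ring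
    _ ≤ X * Y + K * (X * Y * w) * 1 + K * (X * Y * w) * 1 := by gcongr
    _ = X * (Y + 2 * K * Y * w) := by ring
    _ ≤ X * (Y + 2 * K * Y * (1 + m + n)) := by gcongr
    _ = X * (Y + 2 * K * Y + 2 * K * (Y * (m + n))) := by ring
    _ ≤ X * (Y + 2 * K * Y + 2 * K * (1 * (m + n))) := by gcongr
    _ = _ := by ring

theorem stmt_8 (H θ : ℝ) (h1 : 1/2 < H) (h2 : H < 1) (hθ : 0 < θ) :
    ∃ C : ℝ, 0 < C ∧ ∀ s t : ℝ, 0 ≤ s → s < t →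
      H * (2*H - 1) * ∫ u in (0:ℝ)..t, ∫ v in (0:ℝ)..s,
        Real.exp (-θ * (t - u)) * Real.exp (-θ * (s - v)) * |u - v| ^ (2*H - 2)
        ≤ C * (t - s) ^ (2*H - 2) := by
  obtain ⟨a, rfl⟩ : ∃ a, H = (2 - a)/2 := ⟨2 - 2*H, by ring⟩
  have ha0 : 0 < a := by linarith
  have ha1 : a < 1 := by linarith
  have hr : 2 * ((2 - a)/2) - 2 = -a := by ring
  rw [hr]
  set c := (2 - a)/2 * (2 * ((2 - a)/2) - 1) with hc
  have hc0 : 0 < c := mul_pos (by linarith) (by linarith)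
  set K := 1 + 2/θ with hK
  have hK0 : 0 < K := by positivity
  set L := ∫ x, auxE θ x with hL
  set G := ∫ x, auxh a x with hG
  have hL0 : 0 ≤ L := integral_nonneg (auxE_nonneg θ)
  have hG0 : 0 ≤ G := integral_nonneg (auxh_nonneg a)
  set M := (1 + 2*K) * L + 2 * K * (G + G) with hM
  have hM0 : 0 ≤ M := by positivity
  refine ⟨c * (M * L) + 1, by positivity, fun s t hs hst => ?_⟩
  have ht : 0 ≤ t := by linarith
  have hd : 0 < t - s := by linarith
  have hE := auxE_int θ hθ
  have hh := auxh_int a ha1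
  have inner : ∀ u ≤ t, (t - s) ^ a * (∫ v in (0:ℝ)..s,
        Real.exp (-θ * (t - u)) * Real.exp (-θ * (s - v)) * |u - v| ^ (-a)) ≤ auxE θ (t - u) * M := by
    intro u hu
    set p : ℝ → ℝ := fun v => (1 + 2 * K) * auxE θ (s - v)
        + 2 * K * (auxh a (u - v) + auxh a (v - u)) with hp
    have i1 : Integrable (fun v => auxE θ (s - v)) := hE.comp_sub_left s
    have i2 : Integrable (fun v => auxh a (u - v)) := hh.comp_sub_left u
    have i3 : Integrable (fun v => auxh a (v - u)) := hh.comp_sub_right u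
    have hpi : Integrable p := (i1.const_mul _).add ((i2.add i3).const_mul _)
    have hp0 : ∀ v, 0 ≤ p v := fun v => by
      have := auxE_nonneg θ (s - v)
      have := auxh_nonneg a (u - v)
      have := auxh_nonneg a (v - u)
      positivity
    have hpM : ∫ v, p v = M := by
      have i4 : Integrable (fun v => auxh a (u - v) + auxh a (v - u)) := i2.add i3
      simp only [hp]
      rw [integral_add (i1.const_mul _) (i4.const_mul _), integral_const_mul,
        integral_const_mul, integral_add i2 i3, integral_sub_left_eq_self (auxE θ),
        integral_sub_left_eq_self (auxh a), integral_sub_right_eq_self (auxh a)]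
    rw [← intervalIntegral.integral_const_mul, intervalIntegral.integral_of_le hs]
    calc _ ≤ ∫ v in Ioc 0 s, auxE θ (t - u) * p v := by
          apply integral_mono_of_nonneg
          · exact Filter.Eventually.of_forall fun v => by
              dsimp only [Pi.zero_apply]
              positivity
          · exact (hpi.const_mul _).integrableOn
          · filter_upwards [ae_restrict_mem measurableSet_Ioc] with v hv
            exact aux_point a θ ha0 ha1 hθ s t u v hst hu hv.2
      _ ≤ ∫ v, auxE θ (t - u) * p v :=
          setIntegral_le_integral (hpi.const_mul _)
            (Filter.Eventually.of_forall fun v => mul_nonneg (auxE_nonneg _ _) (hp0 v))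
      _ = _ := by rw [integral_const_mul, hpM]
  have outer : (t - s) ^ a * (∫ u in (0:ℝ)..t, ∫ v in (0:ℝ)..s,
        Real.exp (-θ * (t - u)) * Real.exp (-θ * (s - v)) * |u - v| ^ (-a)) ≤ M * L := by
    have i1 : Integrable (fun v => auxE θ (t - v)) := hE.comp_sub_left t
    rw [← intervalIntegral.integral_const_mul, intervalIntegral.integral_of_le ht]
    calc _ ≤ ∫ u in Ioc 0 t, auxE θ (t - u) * M := by
          apply integral_mono_of_nonneg
          · exact Filter.Eventually.of_forall fun u => by
              dsimp only [Pi.zero_apply]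
              refine mul_nonneg (by positivity) ?_
              exact intervalIntegral.integral_nonneg hs fun v _ => by positivity
          · exact (i1.mul_const _).integrableOn
          · filter_upwards [ae_restrict_mem measurableSet_Ioc] with u hu
            exact inner u hu.2
      _ ≤ ∫ u, auxE θ (t - u) * M :=
          setIntegral_le_integral (i1.mul_const _)
            (Filter.Eventually.of_forall fun v => mul_nonneg (auxE_nonneg _ _) hM0)
      _ = _ := by rw [integral_mul_const, integral_sub_left_eq_self (auxE θ), mul_comm]
  have hda : 0 < (t - s) ^ a := by positivity
  generalize (∫ u in (0:ℝ)..t, ∫ v in (0:ℝ)..s,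
        Real.exp (-θ * (t - u)) * Real.exp (-θ * (s - v)) * |u - v| ^ (-a)) = I at *
  rw [Real.rpow_neg hd.le, ← div_eq_mul_inv, le_div_iff₀ hda]
  nlinarith [mul_le_mul_of_nonneg_left outer hc0.le]
end

section
/- Let 1/2 < H < 3/4 and θ > 0. Then the function (a,b,c) ↦ e^{-θ(a+c)} (a+b)^{2H-2} (b+c)^{2H-2} is Lebesgue integrable on [0,∞)³, i.e. ∫_{[0,∞)³} e^{-θ(a+c)} (a+b)^{2H-2} (b+c)^{2H-2} da db dc < ∞. -/
open MeasureTheory Real Set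

theorem stmt_15 (H θ : ℝ) (h1 : 1/2 < H) (h2 : H < 3/4) (hθ : 0 < θ) :
    IntegrableOn (fun p : ℝ × ℝ × ℝ =>
      Real.exp (-θ * (p.1 + p.2.2)) * (p.1 + p.2.1) ^ (2*H - 2) *
        (p.2.1 + p.2.2) ^ (2*H - 2))
      ((Ici (0:ℝ)) ×ˢ (Ici (0:ℝ)) ×ˢ (Ici (0:ℝ))) := by
  have hs : ((volume : Measure (ℝ × ℝ × ℝ)).restrict
      ((Ici (0:ℝ)) ×ˢ (Ici (0:ℝ)) ×ˢ (Ici (0:ℝ)))) =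
      (volume.restrict (Ioi (0:ℝ))).prod
        ((volume.restrict (Ioi (0:ℝ))).prod (volume.restrict (Ioi (0:ℝ)))) := by
    rw [Measure.volume_eq_prod, ← Measure.prod_restrict, Measure.volume_eq_prod,
      ← Measure.prod_restrict, restrict_Ioi_eq_restrict_Ici]
  have hu : Integrable (fun a : ℝ => a ^ (2*H-2) * Real.exp (-θ * a))
      (volume.restrict (Ioi (0:ℝ))) := by
    have := integrableOn_rpow_mul_exp_neg_mul_rpow (p := 1) (s := 2*H-2) (b := θ)
      (by linarith) one_pos hθ
    simpa [IntegrableOn] using this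
  have hv : Integrable (fun a : ℝ => Real.exp (-θ * a)) (volume.restrict (Ioi (0:ℝ))) :=
    exp_neg_integrableOn_Ioi 0 hθ
  have hi : Integrable ((Iic (1:ℝ)).indicator (fun _ : ℝ => (1:ℝ)))
      (volume.restrict (Ioi (0:ℝ))) := by
    rw [integrable_indicator_iff measurableSet_Iic, IntegrableOn,
      Measure.restrict_restrict measurableSet_Iic, Iic_inter_Ioi]
    exact integrableOn_const (by simp)
  have hw : Integrable ((Ioi (1:ℝ)).indicator (fun b : ℝ => b ^ (2*(2*H-2))))
      (volume.restrict (Ioi (0:ℝ))) := by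
    rw [integrable_indicator_iff measurableSet_Ioi]
    have := integrableOn_Ioi_rpow_of_lt (a := 2*(2*H-2)) (c := 1) (by linarith) one_pos
    exact IntegrableOn.mono_measure this Measure.restrict_le_self
  have hg := (hu.mul_prod (hi.mul_prod hu)).add (hv.mul_prod (hw.mul_prod hv))
  rw [IntegrableOn, hs]
  refine hg.mono' ?_ ?_
  · exact Measurable.aestronglyMeasurable (by fun_prop)
  · have hm : ∀ᵐ p : ℝ × ℝ × ℝ ∂((volume.restrict (Ioi (0:ℝ))).prod
        ((volume.restrict (Ioi (0:ℝ))).prod (volume.restrict (Ioi (0:ℝ))))),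
        p ∈ Ioi (0:ℝ) ×ˢ Ioi (0:ℝ) ×ˢ Ioi (0:ℝ) := by
      rw [Measure.prod_restrict, Measure.prod_restrict]
      exact ae_restrict_mem (measurableSet_Ioi.prod (measurableSet_Ioi.prod measurableSet_Ioi))
    filter_upwards [hm] with p hp
    obtain ⟨a, b, c⟩ := p
    simp only [mem_prod, mem_Ioi] at hp
    obtain ⟨ha, hb, hc⟩ := hp
    have hz : 2*H-2 ≤ 0 := by linarith
    have e : Real.exp (-θ * (a + c)) = Real.exp (-θ * a) * Real.exp (-θ * c) := by
      rw [← Real.exp_add]; ring_nf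
    rw [Real.norm_of_nonneg (by positivity)]
    simp only [Pi.add_apply, e]
    by_cases h : b ≤ 1
    · have i1 : (a + b) ^ (2*H-2) ≤ a ^ (2*H-2) :=
        rpow_le_rpow_of_nonpos ha (by linarith) hz
      have i2 : (b + c) ^ (2*H-2) ≤ c ^ (2*H-2) :=
        rpow_le_rpow_of_nonpos hc (by linarith) hz
      rw [indicator_of_mem (by exact h), indicator_of_notMem (by simpa using h)]
      calc _ ≤ Real.exp (-θ * a) * Real.exp (-θ * c) * a ^ (2*H-2) * c ^ (2*H-2) := by gcongr
        _ = _ := by ring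
    · have i1 : (a + b) ^ (2*H-2) ≤ b ^ (2*H-2) :=
        rpow_le_rpow_of_nonpos hb (by linarith) hz
      have i2 : (b + c) ^ (2*H-2) ≤ b ^ (2*H-2) :=
        rpow_le_rpow_of_nonpos hb (by linarith) hz
      rw [indicator_of_notMem (by exact h), indicator_of_mem (by simpa using h)]
      have i3 : b ^ (2*(2*H-2)) = b ^ (2*H-2) * b ^ (2*H-2) := by
        rw [← rpow_add hb]; ring_nf
      calc _ ≤ Real.exp (-θ * a) * Real.exp (-θ * c) * b ^ (2*H-2) * b ^ (2*H-2) := by gcongr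
        _ = _ := by rw [i3]; ring
end

section
/- Let 1/2 < H < 1 and θ > 0, and set α_H = H(2H-1). Define A(t) = α_H ∫₀^t ∫_v^∞ e^{-θx + 2θv} x^{2H-2} dx dv for t ≥ 0. Then, as t → 0⁺, A(t) = θ^{1-2H} H Γ(2H) · t − (1/2) t^{2H} + o(t^{2H}); that is, the function t ↦ A(t) − θ^{1-2H} H Γ(2H) t + (1/2) t^{2H} is o(t^{2H}) as t → 0⁺. -/
open MeasureTheory Real Set Filter

theorem aux_bound_s16 (a θ : ℝ) (ha : 0 < a) (hθ : 0 < θ) :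
    ∃ C : ℝ, ∀ t : ℝ, 0 < t → t ≤ 1 →
      |(∫ v in (0:ℝ)..t, ∫ x in Ioi v, Real.exp (-θ*x + 2*θ*v) * x ^ (a - 1))
        - (1/θ)^a * Real.Gamma a * t + t ^ (a+1) / (a * (a+1))| ≤ C * t * t := by
  set f : ℝ → ℝ := fun x => x ^ (a-1) * Real.exp (-(θ * x)) with hf
  set G := (1/θ)^a * Real.Gamma a with hG
  have hGint : ∫ x in Ioi (0:ℝ), f x = G := Real.integral_rpow_mul_exp_neg_mul_Ioi ha hθ
  have hG0 : 0 < G := by have := Real.Gamma_pos_of_pos ha; positivity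
  have hint : IntegrableOn f (Ioi 0) := by
    by_contra h
    exact hG0.ne' (hGint ▸ integral_undef h)
  have hfnn : ∀ x, 0 < x → 0 ≤ f x := fun x hx => by simp only [hf]; positivity
  have hii : ∀ v, 0 ≤ v → IntervalIntegrable f volume 0 v := fun v hv => by
    rw [intervalIntegrable_iff_integrableOn_Ioc_of_le hv]
    exact hint.mono_set Ioc_subset_Ioi_self
  set g : ℝ → ℝ := fun v => ∫ x in (0:ℝ)..v, f x with hg
  have hsplit : ∀ v, 0 ≤ v → ∫ x in Ioi v, f x = G - g v := fun v hv => by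
    have := intervalIntegral.integral_interval_add_Ioi (a := 0) (b := v) (f := f) (μ := volume) hint
      (hint.mono_set (Ioi_subset_Ioi hv))
    simp only [hg]; linarith
  have hI : ∀ v, 0 ≤ v → ∫ x in Ioi v, Real.exp (-θ*x + 2*θ*v) * x ^ (a - 1)
      = Real.exp (2*θ*v) * (G - g v) := fun v hv => by
    rw [← hsplit v hv, ← integral_const_mul]
    congr 1; ext x
    simp only [hf]
    rw [Real.exp_add]; ring_nf
  have hg0 : ∀ v, 0 ≤ v → 0 ≤ g v := fun v hv => by
    simp only [hg]
    rw [intervalIntegral.integral_of_le hv]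
    exact setIntegral_nonneg measurableSet_Ioc (fun x hx => hfnn x hx.1)
  have hgG : ∀ v, 0 ≤ v → g v ≤ G := fun v hv => by
    have : 0 ≤ ∫ x in Ioi v, f x :=
      setIntegral_nonneg measurableSet_Ioi (fun x hx => hfnn x (hv.trans_lt hx))
    rw [hsplit v hv] at this; linarith
  have hpi : ∀ v : ℝ, IntervalIntegrable (fun x : ℝ => x ^ (a-1)) volume 0 v := fun v =>
    intervalIntegral.intervalIntegrable_rpow' (by linarith)
  have hpv : ∀ v : ℝ, ∫ x in (0:ℝ)..v, x ^ (a-1) = v ^ a / a := fun v => by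
    rw [integral_rpow (Or.inl (by linarith))]
    simp [Real.zero_rpow ha.ne']
  have hup : ∀ v, 0 ≤ v → g v ≤ v ^ a / a := fun v hv => by
    rw [← hpv]
    refine intervalIntegral.integral_mono_on hv (hii v hv) (hpi v) (fun x hx => ?_)
    have : Real.exp (-(θ * x)) ≤ 1 := Real.exp_le_one_iff.2 (by have := mul_nonneg hθ.le hx.1; linarith)
    exact mul_le_of_le_one_right (Real.rpow_nonneg hx.1 _) this
  have hlo : ∀ v, 0 ≤ v → (1 - θ * v) * (v ^ a / a) ≤ g v := fun v hv => by
    rw [← hpv, ← intervalIntegral.integral_const_mul]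
    refine intervalIntegral.integral_mono_on hv ((hpi v).const_mul _) (hii v hv) (fun x hx => ?_)
    have h1 := Real.add_one_le_exp (-(θ * x))
    have h2 : θ * x ≤ θ * v := mul_le_mul_of_nonneg_left hx.2 hθ.le
    simp only [hf]
    rw [mul_comm]
    exact mul_le_mul_of_nonneg_left (by linarith) (Real.rpow_nonneg hx.1 _)
  set C := 2 * θ * Real.exp (2*θ) * G + θ / a with hC
  have hbd : ∀ v, 0 ≤ v → v ≤ 1 → |Real.exp (2*θ*v) * (G - g v) - G + v ^ a / a| ≤ C * v := by
    intro v hv hv1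
    have e1 : 1 ≤ Real.exp (2*θ*v) := Real.one_le_exp (by positivity)
    have e2 : Real.exp (2*θ*v) - 1 ≤ 2*θ*Real.exp (2*θ) * v := by
      have h1 := Real.add_one_le_exp (-(2*θ*v))
      have h2 : Real.exp (2*θ*v) ≤ Real.exp (2*θ) := Real.exp_le_exp.2 (by nlinarith)
      have h3 : Real.exp (2*θ*v) * Real.exp (-(2*θ*v)) = 1 := by rw [← Real.exp_add]; simp
      have h4 : 0 ≤ 2*θ*v := by positivity
      nlinarith [mul_le_mul_of_nonneg_left h1 (zero_le_one.trans e1), mul_le_mul_of_nonneg_left h2 h4]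
    have e3 : v ^ a ≤ 1 := Real.rpow_le_one hv hv1 ha.le
    have e4 : 0 ≤ v ^ a := Real.rpow_nonneg hv _
    have e5 := hup v hv
    have e6 := hlo v hv
    have e7 : (θ * v) * (v^a / a) ≤ θ / a * v := by
      have : (θ * v) * (v^a / a) = (θ / a * v) * v^a := by ring
      rw [this]; exact mul_le_of_le_one_right (by positivity) e3
    have e8 : (Real.exp (2*θ*v) - 1) * (G - g v) ≤ 2*θ*Real.exp (2*θ) * v * G :=
      mul_le_mul e2 (by linarith [hg0 v hv]) (by linarith [hgG v hv]) (by positivity)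
    have e9 : 0 ≤ (Real.exp (2*θ*v) - 1) * (G - g v) :=
      mul_nonneg (by linarith) (by linarith [hgG v hv])
    have e10 : 0 ≤ C * v := by positivity
    rw [abs_le]
    constructor
    · linarith
    · rw [hC]; linarith
  refine ⟨C, fun t ht ht1 => ?_⟩
  have hcong : (∫ v in (0:ℝ)..t, ∫ x in Ioi v, Real.exp (-θ*x + 2*θ*v) * x ^ (a - 1))
      = ∫ v in (0:ℝ)..t, Real.exp (2*θ*v) * (G - g v) := by
    refine intervalIntegral.integral_congr (fun v hv => ?_)
    rw [uIcc_of_le ht.le] at hv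
    exact hI v hv.1
  have hgc : ContinuousOn g (uIcc 0 t) :=
    intervalIntegral.continuousOn_primitive_interval' (hii t ht.le) left_mem_uIcc
  have i1 : IntervalIntegrable (fun v => Real.exp (2*θ*v) * (G - g v)) volume 0 t := by
    apply ContinuousOn.intervalIntegrable
    exact (by fun_prop : Continuous fun v => Real.exp (2*θ*v)).continuousOn.mul
      (continuousOn_const.sub hgc)
  have i2 : IntervalIntegrable (fun v : ℝ => v ^ a / a) volume 0 t :=
    (intervalIntegral.intervalIntegrable_rpow' (by linarith)).div_const a
  have hp : ∫ v in (0:ℝ)..t, v ^ a / a = t ^ (a+1) / (a * (a+1)) := by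
    rw [intervalIntegral.integral_div, integral_rpow (Or.inl (by linarith)),
      Real.zero_rpow (by linarith)]
    field_simp
    ring
  have hc : ∫ v in (0:ℝ)..t, G = G * t := by simp [mul_comm]
  rw [hcong, ← hc, ← hp, ← intervalIntegral.integral_sub i1 intervalIntegrable_const,
    ← intervalIntegral.integral_add (i1.sub intervalIntegrable_const) i2]
  have := intervalIntegral.norm_integral_le_of_norm_le_const (a := 0) (b := t) (C := C * t)
    (f := fun v => Real.exp (2*θ*v) * (G - g v) - G + v ^ a / a) (fun v hv => by
      rw [uIoc_of_le ht.le] at hv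
      refine (hbd v hv.1.le (hv.2.trans ht1)).trans ?_
      exact mul_le_mul_of_nonneg_left hv.2 (by positivity))
  simpa [abs_of_pos ht] using this

theorem stmt_16 (H θ : ℝ) (h1 : 1/2 < H) (h2 : H < 1) (hθ : 0 < θ) :
    Tendsto (fun t : ℝ =>
      ((H * (2*H - 1) * ∫ v in (0:ℝ)..t, ∫ x in Ioi v,
          Real.exp (-θ*x + 2*θ*v) * x ^ (2*H - 2))
        - θ ^ (1 - 2*H) * H * Real.Gamma (2*H) * t + (1/2) * t ^ (2*H)) / t ^ (2*H))
      (nhdsWithin 0 (Ioi 0)) (nhds 0) := by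
  have ha : 0 < 2*H - 1 := by linarith
  obtain ⟨C, hC⟩ := aux_bound_s16 (2*H-1) θ ha hθ
  have hlim : Tendsto (fun t : ℝ => H * (2*H-1) * C * t ^ (2 - 2*H)) (nhdsWithin 0 (Ioi 0)) (nhds 0) := by
    have h : ContinuousAt (fun t : ℝ => t ^ (2 - 2*H)) 0 :=
      Real.continuousAt_rpow_const _ _ (Or.inr (by linarith))
    have h' := (h.tendsto.mono_left (nhdsWithin_le_nhds (s := Ioi 0))).const_mul (H * (2*H-1) * C)
    simpa [Real.zero_rpow (by linarith : 2 - 2*H ≠ 0)] using h'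
  refine squeeze_zero_norm' ?_ hlim
  filter_upwards [Ioc_mem_nhdsGT (zero_lt_one (α := ℝ))] with t ht
  have hb := hC t ht.1 ht.2
  have hGam : Real.Gamma (2*H) = (2*H-1) * Real.Gamma (2*H-1) := by
    have := Real.Gamma_add_one ha.ne'
    rwa [sub_add_cancel] at this
  have hth : (1/θ) ^ (2*H-1) = θ ^ (1 - 2*H) := by
    rw [one_div, Real.inv_rpow hθ.le, ← Real.rpow_neg hθ.le]; congr 1; ring
  rw [show 2*H-1-1 = 2*H-2 by ring, hth, sub_add_cancel] at hb
  set I := ∫ v in (0:ℝ)..t, ∫ x in Ioi v, Real.exp (-θ*x + 2*θ*v) * x ^ (2*H - 2)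
  have hpos : 0 < t ^ (2*H) := Real.rpow_pos_of_pos ht.1 _
  have heq : H * (2*H - 1) * I - θ ^ (1 - 2*H) * H * Real.Gamma (2*H) * t + (1/2) * t ^ (2*H)
      = H * (2*H-1) * (I - θ ^ (1 - 2*H) * Real.Gamma (2*H-1) * t
        + t ^ (2*H) / ((2*H-1) * (2*H))) := by
    rw [hGam]
    have hH : H ≠ 0 := by linarith
    have hk0 : H * (2*H-1) * (t ^ (2*H) / ((2*H-1) * (2*H))) = 1/2 * t ^ (2*H) := by
      generalize t ^ (2*H) = T
      have hne := ha.ne'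
      generalize 2*H-1 = b at hne
      field_simp
    rw [mul_add, hk0]
    ring
  have hk : 0 < H * (2*H-1) := mul_pos (by linarith) ha
  have htt : t ^ (2 - 2*H) * t ^ (2*H) = t * t := by
    rw [← Real.rpow_add ht.1, sub_add_cancel, Real.rpow_two, sq]
  rw [heq, Real.norm_eq_abs, abs_div, abs_mul, abs_of_pos hpos, abs_of_pos hk, div_le_iff₀ hpos,
    mul_assoc _ (t ^ (2 - 2*H)), htt, mul_assoc _ C]
  refine mul_le_mul_of_nonneg_left ?_ hk.le
  rw [mul_assoc C] at hb; exact hb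
end

section
/- Let 1/2 < H < 1 and θ > 0, and set α_H = H(2H-1). Define r(t) = e^{-θt} [ θ^{-2H} H Γ(2H) + α_H ∫₀^t ∫_v^∞ e^{-θx + 2θv} x^{2H-2} dx dv ] for t ≥ 0. Then, as t → 0⁺, r(t) = θ^{-2H} H Γ(2H) − (1/2) t^{2H} + o(t^{2H}); that is, the function t ↦ r(t) − θ^{-2H} H Γ(2H) + (1/2) t^{2H} is o(t^{2H}) as t → 0⁺. -/
open MeasureTheory Real Set Filter

theorem stmt_17 (H θ : ℝ) (h1 : 1/2 < H) (h2 : H < 1) (hθ : 0 < θ) :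
    Tendsto (fun t : ℝ =>
      (Real.exp (-θ*t) * (θ ^ (-(2*H)) * H * Real.Gamma (2*H) +
          H * (2*H - 1) * ∫ v in (0:ℝ)..t, ∫ x in Ioi v,
            Real.exp (-θ*x + 2*θ*v) * x ^ (2*H - 2))
        - θ ^ (-(2*H)) * H * Real.Gamma (2*H) + (1/2) * t ^ (2*H)) / t ^ (2*H))
      (nhdsWithin 0 (Ioi 0)) (nhds 0) := by
  set C : ℝ := θ ^ (-(2*H)) * H * Real.Gamma (2*H) with hC
  set g : ℝ → ℝ := fun x => Real.exp (-θ*x) * x ^ (2*H - 2) with hg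
  have hgi : ∀ a b : ℝ, IntervalIntegrable g volume a b := fun a b =>
    (intervalIntegral.intervalIntegrable_rpow' (by linarith)).continuousOn_mul
      (by fun_prop)
  set G0 : ℝ := (1/θ) ^ (2*H-1) * Real.Gamma (2*H-1) with hG0
  have hgI : ∫ x in Ioi (0:ℝ), g x = G0 := by
    rw [hG0, ← Real.integral_rpow_mul_exp_neg_mul_Ioi (by linarith) hθ]
    congr 1
    ext x
    simp only [hg]
    rw [mul_comm]
    ring_nf
  have hgint : IntegrableOn g (Ioi 0) := by
    by_contra hcon
    have h0 := integral_undef hcon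
    rw [hgI] at h0
    have : 0 < G0 := mul_pos (rpow_pos_of_pos (by positivity) _)
      (Real.Gamma_pos_of_pos (by linarith))
    linarith
  have hCG : H * (2*H-1) * G0 = θ * C := by
    have e1 : Real.Gamma (2*H) = (2*H-1) * Real.Gamma (2*H-1) := by
      rw [← Real.Gamma_add_one (by linarith)]; ring_nf
    have e2 : (1/θ) ^ (2*H-1) = θ * θ ^ (-(2*H)) := by
      rw [one_div, Real.inv_rpow hθ.le, ← Real.rpow_neg hθ.le,
        show -(2*H-1) = 1 + -(2*H) by ring, Real.rpow_add hθ, Real.rpow_one]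
    rw [hG0, hC, e1, e2]; ring
  set G : ℝ → ℝ := fun v => G0 - ∫ x in (0:ℝ)..v, g x with hG
  have hGc : Continuous G :=
    continuous_const.sub (intervalIntegral.continuous_primitive hgi 0)
  have hGd : ∀ t : ℝ, 0 < t → HasDerivAt G (- g t) t := by
    intro t ht
    have hca : ∀ x : ℝ, 0 < x → ContinuousAt g x := fun x hx =>
      (by fun_prop : ContinuousAt (fun x : ℝ => Real.exp (-θ*x)) x).mul
        (Real.continuousAt_rpow_const _ _ (Or.inl hx.ne'))
    have := intervalIntegral.integral_hasDerivAt_right (hgi 0 t)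
      (ContinuousAt.stronglyMeasurableAtFilter isOpen_Ioi
        (fun x hx => hca x hx) t ht) (hca t ht)
    simpa using this.const_sub G0
  have hin : ∀ v : ℝ, 0 ≤ v → ∫ x in Ioi v, Real.exp (-θ*x + 2*θ*v) * x ^ (2*H - 2)
      = Real.exp (2*θ*v) * G v := by
    intro v hv
    have e : ∀ x : ℝ, Real.exp (-θ*x + 2*θ*v) * x ^ (2*H - 2) = Real.exp (2*θ*v) * g x := by
      intro x; simp only [hg]; rw [Real.exp_add]; ring
    simp_rw [e]
    rw [integral_const_mul]
    congr 1
    have := intervalIntegral.integral_interval_add_Ioi (a := 0) (b := v) hgint (hgint.mono_set (Ioi_subset_Ioi hv))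
    simp only [hG]
    linarith
  set J : ℝ → ℝ := fun t => ∫ v in (0:ℝ)..t, Real.exp (2*θ*v) * G v with hJ
  have hJd : ∀ t : ℝ, HasDerivAt J (Real.exp (2*θ*t) * G t) t := by
    intro t
    have hc : Continuous (fun v => Real.exp (2*θ*v) * G v) := by fun_prop
    exact intervalIntegral.integral_hasDerivAt_right (hc.intervalIntegrable _ _)
      (hc.stronglyMeasurableAtFilter _ _) hc.continuousAt
  have hJc : Continuous J := continuous_iff_continuousAt.2 fun t => (hJd t).continuousAt
  have hpos : ∀ᶠ t : ℝ in nhdsWithin 0 (Ioi 0), 0 < t := self_mem_nhdsWithin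
  have hrp : ∀ p : ℝ, 0 < p → Tendsto (fun t : ℝ => t ^ p) (nhdsWithin 0 (Ioi 0)) (nhds 0) := by
    intro p hp
    have := (Real.continuousAt_rpow_const 0 p (Or.inr hp.le)).tendsto
    rw [Real.zero_rpow hp.ne'] at this
    exact this.mono_left nhdsWithin_le_nhds
  have hed : ∀ t : ℝ, HasDerivAt (fun t => Real.exp (θ*t)) (θ * Real.exp (θ*t)) t := by
    intro t
    have := ((hasDerivAt_id t).const_mul θ).exp
    simpa [mul_comm] using this
  have het : Tendsto (fun t => Real.exp (θ*t)) (nhdsWithin 0 (Ioi 0)) (nhds 1) := by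
    have := (hed 0).continuousAt.tendsto
    simp only [mul_zero, Real.exp_zero] at this
    exact this.mono_left nhdsWithin_le_nhds
  have hGt : Tendsto G (nhdsWithin 0 (Ioi 0)) (nhds G0) := by
    have := hGc.tendsto 0
    simp only [hG, intervalIntegral.integral_same, sub_zero] at this
    exact this.mono_left nhdsWithin_le_nhds
  have hJt : Tendsto J (nhdsWithin 0 (Ioi 0)) (nhds 0) := by
    have := hJc.tendsto 0
    simp only [hJ, intervalIntegral.integral_same] at this
    exact this.mono_left nhdsWithin_le_nhds
  set K : ℝ → ℝ := fun t => H*(2*H-1) * (Real.exp (θ*t) * G t) - θ * C + θ/2 * t ^ (2*H)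
    + H * t ^ (2*H-1) with hK
  have hKt : Tendsto (fun t => K t / t ^ (2*H-1)) (nhdsWithin 0 (Ioi 0)) (nhds 0) := by
    apply HasDerivAt.lhopital_zero_nhdsGT
      (f' := fun t => H*(2*H-1)*θ * (Real.exp (θ*t) * G t) + θ*H*t^(2*H-1))
      (g' := fun t => (2*H-1) * t^(2*H-1-1))
    · filter_upwards [hpos] with t ht
      have d := ((((hed t).mul (hGd t ht)).const_mul (H*(2*H-1))).sub_const (θ*C)).add
        ((Real.hasDerivAt_rpow_const (p := 2*H) (Or.inl ht.ne')).const_mul (θ/2)) |>.add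
        ((Real.hasDerivAt_rpow_const (p := 2*H-1) (Or.inl ht.ne')).const_mul H)
      refine d.congr_deriv ?_
      have e : Real.exp (θ*t) * g t = t ^ (2*H-2) := by
        simp only [hg]
        rw [← mul_assoc, ← Real.exp_add]; simp
      rw [show 2*H-1-1 = 2*H-2 by ring]
      linear_combination (-H*(2*H-1)) * e
    · filter_upwards [hpos] with t ht
      exact Real.hasDerivAt_rpow_const (Or.inl ht.ne')
    · filter_upwards [hpos] with t ht
      exact (mul_pos (by linarith) (rpow_pos_of_pos ht _)).ne'
    · have := ((((het.mul hGt).const_mul (H*(2*H-1))).sub_const (θ*C)).add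
        ((hrp (2*H) (by linarith)).const_mul (θ/2))).add
        ((hrp (2*H-1) (by linarith)).const_mul H)
      refine this.trans (le_of_eq ?_)
      congr 1
      linear_combination hCG
    · exact hrp _ (by linarith)
    · have := (((het.mul hGt).const_mul (H*(2*H-1)*θ)).add
        ((hrp (2*H-1) (by linarith)).const_mul (θ*H))).mul
        ((hrp (2-2*H) (by linarith)).div_const (2*H-1))
      simp only [zero_div, mul_zero] at this
      refine this.congr' ?_
      filter_upwards [hpos] with t ht
      rw [show 2*H-1-1 = -(2-2*H) by ring, Real.rpow_neg ht.le]
      have : t ^ (2-2*H) ≠ 0 := (rpow_pos_of_pos ht _).ne'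
      have : 2*H-1 ≠ 0 := by linarith
      field_simp
  set M : ℝ → ℝ := fun t => C + H*(2*H-1)*J t - C * Real.exp (θ*t)
    + 1/2 * (Real.exp (θ*t) * t^(2*H)) with hM
  have hMt : Tendsto (fun t => M t / t ^ (2*H)) (nhdsWithin 0 (Ioi 0)) (nhds 0) := by
    apply HasDerivAt.lhopital_zero_nhdsGT
      (f' := fun t => Real.exp (θ*t) * K t)
      (g' := fun t => (2*H) * t^(2*H-1))
    · filter_upwards [hpos] with t ht
      have d := ((((hJd t).const_mul (H*(2*H-1))).const_add C).sub
        ((hed t).const_mul C)).add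
        (((hed t).mul (Real.hasDerivAt_rpow_const (p := 2*H) (Or.inl ht.ne'))).const_mul (1/2))
      refine d.congr_deriv ?_
      have e : Real.exp (2*θ*t) = Real.exp (θ*t) * Real.exp (θ*t) := by
        rw [← Real.exp_add]; ring_nf
      simp only [hK, e]
      ring
    · filter_upwards [hpos] with t ht
      exact Real.hasDerivAt_rpow_const (Or.inl ht.ne')
    · filter_upwards [hpos] with t ht
      exact (mul_pos (by linarith) (rpow_pos_of_pos ht _)).ne'
    · have := (((hJt.const_mul (H*(2*H-1))).const_add C).sub (het.const_mul C)).add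
        ((het.mul (hrp (2*H) (by linarith))).const_mul (1/2))
      refine this.trans (le_of_eq ?_)
      congr 1
      ring
    · exact hrp _ (by linarith)
    · have := (het.div_const (2*H)).mul hKt
      simp only [mul_zero] at this
      refine this.congr fun t => ?_
      rw [div_mul_div_comm]
  have hfin := (het.inv₀ one_ne_zero).mul hMt
  simp only [mul_zero] at hfin
  refine hfin.congr' ?_
  filter_upwards [hpos] with t ht
  have eJ : ∫ v in (0:ℝ)..t, ∫ x in Ioi v,
            Real.exp (-θ*x + 2*θ*v) * x ^ (2*H - 2) = J t := by
    apply intervalIntegral.integral_congr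
    intro v hv
    rw [uIcc_of_le ht.le] at hv
    exact hin v hv.1
  rw [eJ, neg_mul, Real.exp_neg, ← mul_div_assoc]
  congr 1
  simp only [hM]
  have := (Real.exp_pos (θ*t)).ne'
  field_simp
end
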